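/- arXiv:2411.14361 — 2 statements merged into one kernel-verified Lean document; each statement's English description precedes it below -/
import Mathlib

section
/- Let q ≥ 3 be an odd integer and t ∈ {1,…,q}. There is a constant A > 0 depending only on q such that the following holds for every n ≥ 2: if H is a properly hyperedge-colored, q-uniform, t-approximately strongly regular hypergraph on [n] whose average degree q·|H|/n is at least A · n^{1−2/q} · log n, then H contains a weak rainbow even cover, i.e., an even cover in which some color appears on exactly one hyperedge. -/
open Finset

/-- An index `t ∈ {1,…,q}` is good with respect to the co-degree sequence
`d 1 ≥ ⋯ ≥ d q` (on `n` vertices) if: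
(1) `d r / d t ≤ n^{1−2r/q}` for `1 ≤ r ≤ ⌈(q−t)/2⌉`;
(2) `d r / d t ≤ n^{−(2/q)(r−t)+(1/q)(t−[t even])}` for `t ≤ r ≤ ⌊(q+t)/2⌋`;
(3) `d t ≥ d 1 · n^{−(2/q)(t−1)}` if `t < q/2`, and `d t ≥ d 1 · n^{−1+2/q}`
if `t > q/2`. -/
def GoodIndex (n q : ℕ) (d : ℕ → ℝ) (t : ℕ) : Prop :=
  (∀ r : ℕ, 1 ≤ r → r ≤ (q - t + 1) / 2 →
      d r / d t ≤ (n : ℝ) ^ ((1 : ℝ) - 2 * (r : ℝ) / (q : ℝ))) ∧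
  (∀ r : ℕ, t ≤ r → r ≤ (q + t) / 2 →
      d r / d t ≤ (n : ℝ) ^ (-(2 / (q : ℝ)) * ((r : ℝ) - (t : ℝ)) +
        (1 / (q : ℝ)) * ((t : ℝ) - if Even t then 1 else 0))) ∧
  (2 * t < q → d 1 * (n : ℝ) ^ (-(2 / (q : ℝ)) * ((t : ℝ) - 1)) ≤ d t) ∧
  (q < 2 * t → d 1 * (n : ℝ) ^ (-1 + 2 / (q : ℝ)) ≤ d t)

/-- Co-degree of a set `Q` in an indexed hypergraph: the number of hyperedges
containing `Q`. -/
def iCodeg {n : ℕ} {ι : Type} [Fintype ι] (A : ι → Finset (Fin n))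
    (Q : Finset (Fin n)) : ℕ :=
  (Finset.univ.filter (fun e => Q ⊆ A e)).card

/-- `d_{H,r}`: maximum co-degree over all `r`-element subsets of `[n]`. -/
def iMaxCodeg {n : ℕ} {ι : Type} [Fintype ι] (A : ι → Finset (Fin n))
    (r : ℕ) : ℕ :=
  (Finset.univ.filter (fun Q : Finset (Fin n) => Q.card = r)).sup (iCodeg A)

/-- `t`-approximate strong regularity of an indexed hypergraph: the hyperedges
can be partitioned into groups, each consisting of hyperedges containing a fixed
`t`-element set, each of size between `d_{H,t}/2` and `d_{H,t}`, and `t` is a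
good index for the co-degree sequence. -/
def iASR {n : ℕ} {ι : Type} [Fintype ι] (q t : ℕ) (A : ι → Finset (Fin n)) : Prop :=
  ∃ (p : ℕ) (part : ι → Fin p) (Qs : Fin p → Finset (Fin n)),
    (∀ θ, (Qs θ).card = t) ∧
    (∀ e, Qs (part e) ⊆ A e) ∧
    (∀ θ, (iMaxCodeg A t : ℝ) / 2 ≤
        ((Finset.univ.filter (fun e => part e = θ)).card : ℝ) ∧
      ((Finset.univ.filter (fun e => part e = θ)).card : ℝ) ≤ (iMaxCodeg A t : ℝ)) ∧
    GoodIndex n q (fun r => (iMaxCodeg A r : ℝ)) t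


theorem wre_log_ineq (k l : ℕ) (hk : 1 ≤ k) (hkl : k ≤ l) :
    (k:ℝ) * Real.logb 2 k + l * Real.logb 2 l + k ≤ (k + l : ℝ) * Real.logb 2 (k + l) := by
  have hk' : (1:ℝ) ≤ k := by exact_mod_cast hk
  have hkl' : (k:ℝ) ≤ l := by exact_mod_cast hkl
  have h1 : Real.logb 2 k + 1 ≤ Real.logb 2 (k + l) := by
    have : Real.logb 2 k + 1 = Real.logb 2 (k * 2) := by
      rw [Real.logb_mul (by positivity) (by norm_num), Real.logb_self_eq_one (by norm_num)]
    rw [this]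
    exact Real.logb_le_logb_of_le (by norm_num) (by positivity) (by linarith)
  have h2 : Real.logb 2 l ≤ Real.logb 2 (k + l) :=
    Real.logb_le_logb_of_le (by norm_num) (by linarith) (by linarith)
  nlinarith

theorem wre_charge {V ε κ : Type} {Ψ : κ → Type} [DecidableEq V] [DecidableEq ε] [DecidableEq κ]
    (src tgt : ε → V) (c1 c2 : ε → κ) (ψ : (c : κ) → V → Ψ c) (F0 : Finset ε) (D : ℝ)
    (hdeg : ∀ c v, (((F0.filter (fun e => (c1 e = c ∨ c2 e = c) ∧ src e = v)).card : ℝ) +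
      ((F0.filter (fun e => (c1 e = c ∨ c2 e = c) ∧ tgt e = v)).card : ℝ)) ≤ D)
    (hD : 0 ≤ D)
    (heq : ∀ e ∈ F0, ∀ c, c1 e ≠ c → c2 e ≠ c → ψ c (src e) = ψ c (tgt e))
    (hne : ∀ e ∈ F0, ψ (c1 e) (src e) ≠ ψ (c1 e) (tgt e)) :
    ∀ (k : ℕ) (W : Finset V), W.card = k → ∀ F ⊆ F0, (∀ e ∈ F, src e ∈ W ∧ tgt e ∈ W) →
      (F.card : ℝ) ≤ D * (k * Real.logb 2 k) := by
  classical
  intro k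
  induction k using Nat.strong_induction_on with
  | _ k ih =>
  intro W hW F hF hFW
  by_cases hemp : F = ∅
  · subst hemp
    simp only [card_empty, Nat.cast_zero]
    rcases Nat.eq_zero_or_pos k with h | h
    · simp [h]
    · have : 0 ≤ Real.logb 2 (k:ℝ) := Real.logb_nonneg (by norm_num) (by exact_mod_cast h)
      positivity
  obtain ⟨e0, he0⟩ := Finset.nonempty_iff_ne_empty.mpr hemp
  set c := c1 e0 with hc
  set K := W.filter (fun w => ψ c w = ψ c (src e0)) with hK
  set L := W.filter (fun w => ¬ ψ c w = ψ c (src e0)) with hL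
  have hKL : K.card + L.card = k := by
    rw [hK, hL, Finset.card_filter_add_card_filter_not, hW]
  have hKpos : 1 ≤ K.card := Finset.card_pos.mpr ⟨src e0, by simp [hK, (hFW e0 he0).1]⟩
  have hLpos : 1 ≤ L.card := Finset.card_pos.mpr ⟨tgt e0, by
    simp only [hL, mem_filter]
    exact ⟨(hFW e0 he0).2, fun h => hne e0 (hF he0) h.symm⟩⟩
  set FK := F.filter (fun e => src e ∈ K ∧ tgt e ∈ K) with hFK
  set FL := F.filter (fun e => src e ∈ L ∧ tgt e ∈ L) with hFL
  set X := F.filter (fun e => (c1 e = c ∨ c2 e = c) ∧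
    ((src e ∈ K ∧ tgt e ∈ L) ∨ (src e ∈ L ∧ tgt e ∈ K))) with hX
  have hcov : F ⊆ FK ∪ FL ∪ X := by
    intro e he
    have h1 := heq e (hF he) c
    have h2 := hFW e he
    simp only [hFK, hFL, hX, hK, hL, mem_union, mem_filter]
    by_cases ha : c1 e = c <;> by_cases hb : c2 e = c <;>
      by_cases hs : ψ c (src e) = ψ c (src e0) <;> by_cases ht : ψ c (tgt e) = ψ c (src e0) <;>
      simp_all
  have hcard : (F.card : ℝ) ≤ FK.card + FL.card + X.card := by
    have := (Finset.card_le_card hcov).trans (Finset.card_union_le _ _)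
    have h2 := Finset.card_union_le FK FL
    exact_mod_cast (by omega : F.card ≤ FK.card + FL.card + X.card)
  have hXS : ∀ S : Finset V, (∀ e ∈ X, src e ∈ S ∨ tgt e ∈ S) → (X.card : ℝ) ≤ D * S.card := by
    intro S hS
    have hsub : X ⊆ S.biUnion (fun v =>
        F0.filter (fun e => (c1 e = c ∨ c2 e = c) ∧ src e = v) ∪
        F0.filter (fun e => (c1 e = c ∨ c2 e = c) ∧ tgt e = v)) := by
      intro e he
      have h1 := hS e he
      have h2 := (mem_filter.mp he)
      have h3 := hF h2.1
      simp only [mem_biUnion, mem_union, mem_filter]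
      rcases h1 with h1 | h1
      · exact ⟨_, h1, Or.inl ⟨h3, h2.2.1, rfl⟩⟩
      · exact ⟨_, h1, Or.inr ⟨h3, h2.2.1, rfl⟩⟩
    have h4 := (Finset.card_le_card hsub).trans Finset.card_biUnion_le
    calc (X.card : ℝ) ≤ ∑ v ∈ S, ((F0.filter (fun e => (c1 e = c ∨ c2 e = c) ∧ src e = v) ∪
        F0.filter (fun e => (c1 e = c ∨ c2 e = c) ∧ tgt e = v)).card : ℝ) := by exact_mod_cast h4
      _ ≤ ∑ v ∈ S, D := by
        apply Finset.sum_le_sum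
        intro v _
        refine le_trans ?_ (hdeg c v)
        exact_mod_cast Finset.card_union_le _ _
      _ = D * S.card := by simp [mul_comm]
  have hXK := hXS K (fun e he => by
    have := (mem_filter.mp he).2.2; tauto)
  have hXL := hXS L (fun e he => by
    have := (mem_filter.mp he).2.2; tauto)
  have hFK' := ih K.card (by omega) K rfl FK ((filter_subset _ _).trans hF)
    (fun e he => (mem_filter.mp he).2)
  have hFL' := ih L.card (by omega) L rfl FL ((filter_subset _ _).trans hF)
    (fun e he => (mem_filter.mp he).2)
  have hk : (k : ℝ) = K.card + L.card := by exact_mod_cast hKL.symm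
  rw [hk]
  rcases le_total K.card L.card with h | h
  · have := mul_le_mul_of_nonneg_left (wre_log_ineq _ _ hKpos h) hD
    linarith
  · have := mul_le_mul_of_nonneg_left (wre_log_ineq _ _ hLpos h) hD
    rw [add_comm (L.card:ℝ) (K.card:ℝ)] at this
    linarith

/-- indicator vector -/
def wreInd {n : ℕ} (s : Finset (Fin n)) : Fin n → ZMod 2 := fun v => if v ∈ s then 1 else 0

theorem wre_cover {n : ℕ} {ι κ : Type} [Fintype ι] [DecidableEq κ]
    (edge : ι → Finset (Fin n)) (color : ι → κ) (e : ι)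
    (h : wreInd (edge e) ∈ Submodule.span (ZMod 2)
      ((fun f => wreInd (edge f)) '' {f | color f ≠ color e})) :
    ∃ S : Finset ι, S.Nonempty ∧
          (∀ v : Fin n, Even ((S.filter (fun e => v ∈ edge e)).card)) ∧
          ∃ c : κ, (S.filter (fun e => color e = c)).card = 1 := by
  classical
  rw [Finsupp.mem_span_image_iff_linearCombination] at h
  obtain ⟨l, hl, hsum⟩ := h
  have hsupp : ∀ f ∈ l.support, color f ≠ color e := fun f hf => hl hf
  have he : e ∉ l.support := fun h => hsupp e h rfl
  have h01 : ∀ x : ZMod 2, x ≠ 0 → x = 1 := by decide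
  refine ⟨insert e l.support, ⟨e, by simp⟩, ?_, color e, ?_⟩
  · intro v
    rw [← ZMod.natCast_eq_zero_iff_even, Finset.card_filter]
    push_cast
    rw [Finset.sum_insert he]
    have := congrFun hsum v
    rw [Finsupp.linearCombination_apply, Finsupp.sum, Finset.sum_apply] at this
    have h2 : ∑ i ∈ l.support, (if v ∈ edge i then (1:ZMod 2) else 0) = wreInd (edge e) v := by
      rw [← this]
      apply Finset.sum_congr rfl
      intro i hi
      rw [Pi.smul_apply, h01 _ (Finsupp.mem_support_iff.mp hi)]
      simp [wreInd]
    rw [h2, wreInd]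
    split_ifs <;> decide
  · rw [Finset.card_eq_one]
    refine ⟨e, ?_⟩
    ext f
    simp only [mem_filter, mem_insert, mem_singleton]
    constructor
    · rintro ⟨h | h, h2⟩
      · exact h
      · exact absurd h2 (hsupp f h)
    · rintro rfl; simp

/-- update -/
def wreUpd {n ℓ : ℕ} (l : Fin ℓ × (Fin ℓ → Fin n)) (α : Fin n) : Fin ℓ → Fin n :=
  Function.update l.2 l.1 α

theorem wre_block {n ℓ : ℕ} (α β : Fin n) :
    ((univ : Finset ((Fin ℓ × (Fin ℓ → Fin n)) × (Fin ℓ × (Fin ℓ → Fin n)))).filter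
      (fun x => wreUpd x.1 α = wreUpd x.2 β)).card ≤
      (ℓ * n ^ ℓ) * ((if α = β then n else 0) + ℓ) := by
  classical
  set Y := (univ : Finset ((Fin ℓ × (Fin ℓ → Fin n)) × (Fin ℓ × (Fin ℓ → Fin n)))).filter
      (fun x => wreUpd x.1 α = wreUpd x.2 β) with hY
  have h1 : (Y.filter (fun x => x.1.1 = x.2.1)).card ≤ (ℓ * n ^ ℓ) * (if α = β then n else 0) := by
    split_ifs with hab
    · calc _ ≤ (univ : Finset ((Fin ℓ × (Fin ℓ → Fin n)) × Fin n)).card := by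
            apply Finset.card_le_card_of_injOn (fun x => (x.1, x.2.2 x.2.1)) (by simp)
            rintro ⟨⟨j, z⟩, ⟨j2, z2⟩⟩ hx ⟨⟨i, y⟩, ⟨i2, y2⟩⟩ hy hxy
            simp only [hY, coe_filter, mem_filter, mem_univ, true_and, Set.mem_ofPred_eq] at hx hy
            simp only [wreUpd] at hx hy
            simp only [Prod.mk.injEq] at hxy
            obtain ⟨hx1, rfl⟩ := hx
            obtain ⟨hy1, rfl⟩ := hy
            obtain ⟨⟨rfl, rfl⟩, h3⟩ := hxy
            simp only [Prod.mk.injEq, true_and]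
            funext i
            by_cases hi : i = j
            · subst hi; exact h3
            · have a1 := congrFun hx1 i
              have a2 := congrFun hy1 i
              simp only [Function.update_of_ne hi] at a1 a2
              rw [← a1, ← a2]
        _ = _ := by simp
    · rw [Nat.mul_zero, Nat.le_zero, Finset.card_eq_zero, Finset.filter_eq_empty_iff]
      rintro ⟨⟨j, z⟩, ⟨j2, z2⟩⟩ hx hj
      simp only [hY, mem_filter, mem_univ, true_and] at hx hj
      simp only [wreUpd] at hx
      subst hj
      have := congrFun hx j
      simp at this
      exact hab this
  have h2 : (Y.filter (fun x => ¬ x.1.1 = x.2.1)).card ≤ (ℓ * n ^ ℓ) * ℓ := by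
    calc _ ≤ (univ : Finset ((Fin ℓ × (Fin ℓ → Fin n)) × Fin ℓ)).card := by
            apply Finset.card_le_card_of_injOn
              (fun x => ((x.1.1, Function.update x.1.2 x.2.1 (x.2.2 x.2.1)), x.2.1)) (by simp)
            rintro ⟨⟨j, z⟩, ⟨j2, z2⟩⟩ hx ⟨⟨i, y⟩, ⟨i2, y2⟩⟩ hy hxy
            simp only [hY, coe_filter, mem_filter, mem_univ, true_and, Set.mem_ofPred_eq] at hx hy
            simp only [wreUpd] at hx hy
            simp only [Prod.mk.injEq] at hxy
            obtain ⟨⟨rfl, h3⟩, rfl⟩ := hxy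
            obtain ⟨hx1, hx2⟩ := hx
            obtain ⟨hy1, hy2⟩ := hy
            have hz : z = y := by
              funext i
              by_cases hi : i = j2
              · subst hi
                have a1 := congrFun hx1 i
                have a2 := congrFun hy1 i
                rw [Function.update_of_ne (Ne.symm hx2), Function.update_self] at a1 a2
                rw [a1, a2]
              · have := congrFun h3 i
                simpa only [Function.update_of_ne hi] using this
            subst hz
            simp only [Prod.mk.injEq, true_and]
            funext i
            by_cases hi : i = j2
            · subst hi
              simpa using congrFun h3 i
            · have a1 := congrFun hx1 i
              have a2 := congrFun hy1 i
              rw [Function.update_of_ne hi _ z2] at a1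
              rw [Function.update_of_ne hi _ y2] at a2
              rw [← a1, ← a2]
        _ = _ := by simp
  have h3 := Finset.card_filter_add_card_filter_not (s := Y) (fun x => x.1.1 = x.2.1)
  rw [Nat.mul_add]
  omega

theorem wre_blocks {n ℓ m : ℕ} (α β : Fin m → Fin n) :
    ((univ : Finset ((Fin m → (Fin ℓ × (Fin ℓ → Fin n))) × (Fin m → (Fin ℓ × (Fin ℓ → Fin n))))).filter
      (fun x => (fun a => wreUpd (x.1 a) (α a)) = (fun a => wreUpd (x.2 a) (β a)))).card ≤
      (ℓ * n ^ ℓ) ^ m * ∏ a, ((if α a = β a then n else 0) + ℓ) := by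
  classical
  calc _ ≤ (Fintype.piFinset (fun a : Fin m =>
        (univ : Finset ((Fin ℓ × (Fin ℓ → Fin n)) × (Fin ℓ × (Fin ℓ → Fin n)))).filter
      (fun x => wreUpd x.1 (α a) = wreUpd x.2 (β a)))).card := by
        apply Finset.card_le_card_of_injOn (fun x a => (x.1 a, x.2 a))
        · intro x hx
          simp only [coe_filter, mem_univ, true_and, Set.mem_ofPred_eq] at hx
          simp only [Fintype.coe_piFinset, Set.mem_pi, coe_filter, mem_univ, true_and, Set.mem_ofPred_eq]
          intro a _
          exact congrFun hx a
        · intro x _ y _ hxy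
          apply Prod.ext
          · funext a; exact (Prod.ext_iff.mp (congrFun hxy a)).1
          · funext a; exact (Prod.ext_iff.mp (congrFun hxy a)).2
    _ = ∏ a : Fin m, _ := Fintype.card_piFinset _
    _ ≤ ∏ a : Fin m, (ℓ * n ^ ℓ) * ((if α a = β a then n else 0) + ℓ) :=
        Finset.prod_le_prod' (fun a _ => wre_block _ _)
    _ = _ := by rw [Finset.prod_mul_distrib]; simp

theorem wre_codeg {n : ℕ} {ι : Type} [Fintype ι] (A : ι → Finset (Fin n)) (Q : Finset (Fin n)) :
    (Finset.univ.filter (fun e => Q ⊆ A e)).card ≤ iMaxCodeg A Q.card := by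
  unfold iMaxCodeg
  exact Finset.le_sup (f := iCodeg A) (b := Q) (by simp)

theorem wre_anti {n : ℕ} {ι : Type} [Fintype ι] (A : ι → Finset (Fin n)) {r s : ℕ} (h : r ≤ s) :
    iMaxCodeg A s ≤ iMaxCodeg A r := by
  unfold iMaxCodeg
  apply Finset.sup_le
  intro Q hQ
  simp only [mem_filter, mem_univ, true_and] at hQ
  obtain ⟨Q', hQ', hc⟩ := Finset.exists_subset_card_eq (h.trans hQ.ge)
  refine le_trans ?_ (Finset.le_sup (f := iCodeg A) (b := Q') (by simp [hc]))
  apply Finset.card_le_card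
  intro e he
  simp only [mem_filter, mem_univ, true_and] at he ⊢
  exact hQ'.trans he

/-- half pattern -/
def wrePat {n m : ℕ} {ι : Type} (u : ι → Fin m → Fin n) (b : Bool) (p : ι × ι) (a : Fin m) :
    Fin n := if decide (a.val % 2 = 0) = b then u p.1 a else u p.2 a

theorem wre_parity (m : ℕ) :
    ((univ : Finset (Fin m)).filter (fun a => decide (a.val % 2 = 0) = true)).card ≤ (m + 1) / 2 ∧
    ((univ : Finset (Fin m)).filter (fun a => decide (a.val % 2 = 0) = false)).card ≤ m / 2 := by
  constructor
  · calc _ ≤ (range ((m + 1) / 2)).card := by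
          apply Finset.card_le_card_of_injOn (fun a => a.val / 2)
          · intro a ha
            simp at ha ⊢
            omega
          · intro a ha b hb hab
            simp at ha hb hab
            ext; omega
      _ = _ := by simp
  · calc _ ≤ (range (m / 2)).card := by
          apply Finset.card_le_card_of_injOn (fun a => a.val / 2)
          · intro a ha
            simp at ha ⊢
            omega
          · intro a ha b hb hab
            simp at ha hb hab
            ext; omega
      _ = _ := by simp

theorem wre_parity' (m : ℕ) (b : Bool) (J : Finset (Fin m)) :
    let s := (J.filter (fun a => decide (a.val % 2 = 0) = b)).card
    let r := (J.filter (fun a => ¬ decide (a.val % 2 = 0) = b)).card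
    (s ≤ (m + 1) / 2 ∧ r ≤ m / 2) ∨ (s ≤ m / 2 ∧ r ≤ (m + 1) / 2) := by
  intro s r
  have h := wre_parity m
  have hs : ∀ c : Bool, (J.filter (fun a => decide (a.val % 2 = 0) = c)).card ≤
    ((univ : Finset (Fin m)).filter (fun a => decide (a.val % 2 = 0) = c)).card := fun c =>
    Finset.card_le_card (Finset.filter_subset_filter _ (Finset.subset_univ _))
  have h1 := hs true
  have h2 := hs false
  cases b
  · right
    simp only [s, r, Bool.not_eq_false]
    omega
  · left
    simp only [s, r, Bool.not_eq_true]
    omega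

theorem wre_pairs {n m t P ℓ : ℕ} {ι κ : Type} [Fintype ι] [DecidableEq ι] [DecidableEq κ]
    (edge : ι → Finset (Fin n)) (color : ι → κ) (part : ι → Fin P) (Qs : Fin P → Finset (Fin n))
    (u : ι → Fin m → Fin n) (b : Bool)
    (ht : 1 ≤ t)
    (hprop : ∀ e f, e ≠ f → color e = color f → Disjoint (edge e) (edge f))
    (hQc : ∀ θ, (Qs θ).card = t) (hQ : ∀ e, Qs (part e) ⊆ edge e)
    (hui : ∀ e, Function.Injective (u e)) (hue : ∀ e a, u e a ∈ edge e \ Qs (part e))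
    (hpart : ∀ θ, (univ.filter (fun e => part e = θ)).card ≤ iMaxCodeg edge t)
    (N1 : ∀ s r, (s ≤ (m + 1) / 2 ∧ r ≤ m / 2) ∨ (s ≤ m / 2 ∧ r ≤ (m + 1) / 2) →
      (iMaxCodeg edge (t + r) : ℝ) * ((n : ℝ) / ℓ) ^ (s + r) ≤ n * iMaxCodeg edge t)
    (N2 : ∀ r, 1 ≤ r → r ≤ (m + 1) / 2 →
      (iMaxCodeg edge r : ℝ) * ((n : ℝ) / ℓ) ^ r ≤ n * iMaxCodeg edge t)
    (p : ι × ι) (hp : part p.1 = part p.2) (J : Finset (Fin m)) :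
    ((univ.filter (fun p2 : ι × ι => part p2.1 = part p2.2 ∧ color p2.1 = color p.1 ∧
      ∀ a ∈ J, wrePat u b p a = wrePat u b p2 a)).card : ℝ) * ((n : ℝ) / ℓ) ^ J.card ≤
      2 * (n * iMaxCodeg edge t) := by
  classical
  set Js := J.filter (fun a => decide (a.val % 2 = 0) = b) with hJs
  set Jr := J.filter (fun a => ¬ decide (a.val % 2 = 0) = b) with hJr
  have hsr : Js.card + Jr.card = J.card := Finset.card_filter_add_card_filter_not _
  have hpar := wre_parity' m b J
  simp only [← hJs, ← hJr] at hpar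
  set Y := univ.filter (fun p2 : ι × ι => part p2.1 = part p2.2 ∧ color p2.1 = color p.1 ∧
      ∀ a ∈ J, wrePat u b p a = wrePat u b p2 a) with hY
  have hYJs : ∀ p2 ∈ Y, ∀ a ∈ Js, u p.1 a = u p2.1 a := by
    intro p2 h2 a ha
    have h3 := (mem_filter.mp h2).2.2.2 a (mem_filter.mp ha).1
    simpa only [wrePat, (mem_filter.mp ha).2, if_true] using h3
  have hYJr : ∀ p2 ∈ Y, ∀ a ∈ Jr, u p.2 a = u p2.2 a := by
    intro p2 h2 a ha
    have h3 := (mem_filter.mp h2).2.2.2 a (mem_filter.mp ha).1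
    simpa only [wrePat, (mem_filter.mp ha).2, if_false] using h3
  have hnl : (0:ℝ) ≤ (n : ℝ) / ℓ := by positivity
  -- same first edge
  have hA : (Y.filter (fun p2 => p2.1 = p.1)).card ≤ iMaxCodeg edge (t + Jr.card) := by
    have hcard : (Qs (part p.2) ∪ Jr.image (u p.2)).card = t + Jr.card := by
      rw [Finset.card_union_of_disjoint, hQc, Finset.card_image_of_injective _ (hui _)]
      rw [Finset.disjoint_right]
      intro x hx
      obtain ⟨a, _, rfl⟩ := mem_image.mp hx
      exact (mem_sdiff.mp (hue p.2 a)).2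
    rw [← hcard]
    refine le_trans ?_ (wre_codeg edge _)
    apply Finset.card_le_card_of_injOn (fun p2 => p2.2)
    · intro p2 h2
      simp only [coe_filter, Set.mem_ofPred_eq] at h2
      simp only [coe_filter, Set.mem_ofPred_eq, mem_univ, true_and]
      have h3 := (mem_filter.mp h2.1).2
      apply Finset.union_subset
      · rw [← hp, ← h2.2, h3.1]; exact hQ _
      · intro x hx
        obtain ⟨a, ha, rfl⟩ := mem_image.mp hx
        rw [hYJr p2 h2.1 a ha]
        exact (mem_sdiff.mp (hue _ a)).1
    · intro x hx y hy hxy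
      simp only [coe_filter, Set.mem_ofPred_eq] at hx hy
      exact Prod.ext (hx.2.trans hy.2.symm) hxy
  -- different first edge
  have huniq : ∀ x ∈ Y, ∀ y ∈ Y, part x.1 = part y.1 → x.1 = y.1 := by
    intro x hx y hy hxy
    by_contra hne
    have h1 := hprop _ _ hne ((mem_filter.mp hx).2.2.1.trans (mem_filter.mp hy).2.2.1.symm)
    obtain ⟨v, hv⟩ : (Qs (part x.1)).Nonempty := by
      rw [← Finset.card_pos, hQc]; omega
    exact Finset.disjoint_left.mp h1 (hQ _ hv) (hQ y.1 (hxy ▸ hv))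
  have hB : ((Y.filter (fun p2 => ¬ p2.1 = p.1)).card : ℝ) * ((n : ℝ) / ℓ) ^ J.card ≤
      n * iMaxCodeg edge t := by
    by_cases hs : Js = ∅
    · have hJ : J.card = Jr.card := by rw [← hsr, hs]; simp
      rw [hJ]
      by_cases hr : Jr = ∅
      · rw [hr]
        simp only [card_empty, pow_zero, mul_one]
        have hcol : ((Y.filter (fun p2 => ¬ p2.1 = p.1)).image (fun p2 => p2.1)).card ≤ n := by
          have hne : ∀ e, (edge e).Nonempty := fun e => by
            rw [← Finset.card_pos]
            have := Finset.card_le_card (hQ e)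
            rw [hQc] at this; omega
          choose g hg using hne
          calc _ ≤ (univ : Finset (Fin n)).card := by
                apply Finset.card_le_card_of_injOn g (by simp)
                intro x hx y hy hxy
                by_contra hne
                simp only [coe_image, Set.mem_image, coe_filter, Set.mem_ofPred_eq] at hx hy
                obtain ⟨x', hx', rfl⟩ := hx
                obtain ⟨y', hy', rfl⟩ := hy
                have h1 := hprop _ _ hne ((mem_filter.mp hx'.1).2.2.1.trans
                  (mem_filter.mp hy'.1).2.2.1.symm)
                exact Finset.disjoint_left.mp h1 (hg _) (hxy ▸ hg _)
            _ = n := by simp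
        have := Finset.card_le_mul_card_image (f := fun p2 : ι × ι => p2.1)
          (Y.filter (fun p2 => ¬ p2.1 = p.1)) (iMaxCodeg edge t) (by
            intro e he
            refine le_trans ?_ (hpart (part e))
            apply Finset.card_le_card_of_injOn (fun p2 => p2.2)
            · intro x hx
              simp only [coe_filter, Set.mem_ofPred_eq, mem_univ, true_and] at hx ⊢
              rw [← hx.2]
              exact (mem_filter.mp (mem_filter.mp hx.1).1).2.1.symm
            · intro x hx y hy hxy
              simp only [coe_filter, Set.mem_ofPred_eq] at hx hy
              exact Prod.ext (hx.2.trans hy.2.symm) hxy)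
        have h5 := this.trans (Nat.mul_le_mul_left _ hcol)
        rw [mul_comm (n:ℝ)]
        exact_mod_cast h5
      · have hr1 : 1 ≤ Jr.card := Finset.card_pos.mpr (Finset.nonempty_iff_ne_empty.mpr hr)
        refine le_trans ?_ (N2 Jr.card hr1 (by omega))
        apply mul_le_mul_of_nonneg_right _ (by positivity)
        have hcard : (Jr.image (u p.2)).card = Jr.card :=
          Finset.card_image_of_injective _ (hui _)
        rw [← hcard]
        norm_cast
        refine le_trans ?_ (wre_codeg edge _)
        apply Finset.card_le_card_of_injOn (fun p2 => p2.2)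
        · intro p2 h2
          simp only [coe_filter, Set.mem_ofPred_eq] at h2
          simp only [coe_filter, Set.mem_ofPred_eq, mem_univ, true_and]
          intro x hx
          obtain ⟨a, ha, rfl⟩ := mem_image.mp hx
          rw [hYJr p2 h2.1 a ha]
          exact (mem_sdiff.mp (hue _ a)).1
        · intro x hx y hy hxy
          simp only [coe_filter, Set.mem_ofPred_eq] at hx hy
          refine Prod.ext (huniq x hx.1 y hy.1 ?_) hxy
          rw [(mem_filter.mp hx.1).2.1, (mem_filter.mp hy.1).2.1]
          exact congrArg part hxy
    · have : Y.filter (fun p2 => ¬ p2.1 = p.1) = ∅ := by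
        rw [Finset.filter_eq_empty_iff]
        intro p2 h2 hne
        obtain ⟨a, ha⟩ := Finset.nonempty_iff_ne_empty.mpr hs
        have h1 := hprop _ _ hne (mem_filter.mp h2).2.2.1
        refine Finset.disjoint_left.mp h1 (mem_sdiff.mp (hue p2.1 a)).1 ?_
        rw [← hYJs p2 h2 a ha]
        exact (mem_sdiff.mp (hue p.1 a)).1
      rw [this]
      simp only [card_empty, Nat.cast_zero, zero_mul]
      positivity
  have hA' : ((Y.filter (fun p2 => p2.1 = p.1)).card : ℝ) * ((n : ℝ) / ℓ) ^ J.card ≤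
      n * iMaxCodeg edge t := by
    refine le_trans ?_ (N1 Js.card Jr.card hpar)
    rw [hsr]
    apply mul_le_mul_of_nonneg_right _ (by positivity)
    exact_mod_cast hA
  have hsplit : (Y.card : ℝ) = (Y.filter (fun p2 => p2.1 = p.1)).card +
      (Y.filter (fun p2 => ¬ p2.1 = p.1)).card := by
    exact_mod_cast (Finset.card_filter_add_card_filter_not _).symm
  rw [hsplit, add_mul]
  linarith

theorem wre_pairs_sum {n m P ℓ : ℕ} {ι κ : Type} [Fintype ι] [DecidableEq ι] [DecidableEq κ]
    (color : ι → κ) (part : ι → Fin P) (u : ι → Fin m → Fin n) (b : Bool) (M : ℝ)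
    (hℓ : 1 ≤ ℓ) (hℓn : ℓ ≤ n) (p : ι × ι)
    (h : ∀ J : Finset (Fin m),
    ((univ.filter (fun p2 : ι × ι => part p2.1 = part p2.2 ∧ color p2.1 = color p.1 ∧
      ∀ a ∈ J, wrePat u b p a = wrePat u b p2 a)).card : ℝ) * ((n : ℝ) / ℓ) ^ J.card ≤ M) :
    ∑ p2 ∈ univ.filter (fun p2 : ι × ι => part p2.1 = part p2.2 ∧ color p2.1 = color p.1),
      (∏ a, ((if wrePat u b p a = wrePat u b p2 a then (n:ℝ) else 0) + ℓ)) ≤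
      4 ^ m * (ℓ : ℝ) ^ m * M := by
  classical
  have hℓ0 : (0:ℝ) < ℓ := by exact_mod_cast hℓ
  have hln : (ℓ:ℝ) ≤ n := by exact_mod_cast hℓn
  have hnl : (1:ℝ) ≤ (n : ℝ) / ℓ := by rw [le_div_iff₀ hℓ0]; linarith
  set agr : ι × ι → Finset (Fin m) :=
    fun p2 => univ.filter (fun a => wrePat u b p a = wrePat u b p2 a) with hagr
  have hpt : ∀ p2, (∏ a, ((if wrePat u b p a = wrePat u b p2 a then (n:ℝ) else 0) + ℓ)) ≤
      (2 * ℓ) ^ m * ((n : ℝ) / ℓ) ^ (agr p2).card := by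
    intro p2
    calc _ ≤ ∏ a : Fin m, ((2 * (ℓ:ℝ)) * (if wrePat u b p a = wrePat u b p2 a then (n:ℝ)/ℓ else 1)) := by
          apply Finset.prod_le_prod
          · intro a _; split_ifs <;> positivity
          · intro a _
            split_ifs
            · have : (2 * (ℓ:ℝ)) * (n/ℓ) = 2 * n := by field_simp
              rw [this]; linarith
            · linarith
      _ = _ := by
          rw [Finset.prod_mul_distrib, Finset.prod_ite]
          simp [hagr, div_pow]
  set S := univ.filter (fun p2 : ι × ι => part p2.1 = part p2.2 ∧ color p2.1 = color p.1) with hS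
  calc _ ≤ ∑ p2 ∈ S, (2 * (ℓ:ℝ)) ^ m * ((n : ℝ) / ℓ) ^ (agr p2).card :=
        Finset.sum_le_sum (fun p2 _ => hpt p2)
    _ = (2 * (ℓ:ℝ)) ^ m * ∑ J : Finset (Fin m), ∑ p2 ∈ S with agr p2 = J, ((n : ℝ) / ℓ) ^ (agr p2).card := by
        rw [← Finset.mul_sum, Finset.sum_fiberwise]
    _ ≤ (2 * (ℓ:ℝ)) ^ m * ∑ J : Finset (Fin m), M := by
        apply mul_le_mul_of_nonneg_left _ (by positivity)
        apply Finset.sum_le_sum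
        intro J _
        refine le_trans ?_ (h J)
        rw [Finset.sum_congr rfl (g := fun _ => ((n : ℝ) / ℓ) ^ J.card)
          (fun x hx => by rw [(mem_filter.mp hx).2])]
        rw [Finset.sum_const, nsmul_eq_mul]
        apply mul_le_mul_of_nonneg_right _ (by positivity)
        norm_cast
        apply Finset.card_le_card
        intro x hx
        simp only [hS, mem_filter, mem_univ, true_and] at hx ⊢
        refine ⟨hx.1.1, hx.1.2, ?_⟩
        intro a ha
        rw [← hx.2] at ha
        simpa [hagr] using ha
    _ = _ := by
        simp only [sum_const, card_univ, Fintype.card_finset, Fintype.card_fin, nsmul_eq_mul]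
        push_cast
        rw [show (4:ℝ) = 2 * 2 by norm_num, mul_pow, mul_pow]; ring


/-- endpoint -/
def wreEnd {n m ℓ : ℕ} {ι : Type} (u : ι → Fin m → Fin n) (b : Bool)
    (x : (ι × ι) × (Fin m → (Fin ℓ × (Fin ℓ → Fin n)))) : Fin m → Fin ℓ → Fin n :=
  fun a => wreUpd (x.2 a) (wrePat u b x.1 a)

theorem wre_second {n m P ℓ : ℕ} {ι κ : Type} [Fintype ι] [DecidableEq ι] [DecidableEq κ]
    (color : ι → κ) (part : ι → Fin P) (u : ι → Fin m → Fin n) (b : Bool) (M : ℝ)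
    (h : ∀ p : ι × ι, part p.1 = part p.2 →
      ∑ p2 ∈ univ.filter (fun p2 : ι × ι => part p2.1 = part p2.2 ∧ color p2.1 = color p.1),
      (∏ a, ((if wrePat u b p a = wrePat u b p2 a then (n:ℝ) else 0) + ℓ)) ≤ M)
    (E0 : Finset ((ι × ι) × (Fin m → (Fin ℓ × (Fin ℓ → Fin n)))))
    (hE0 : E0 = (univ.filter (fun p : ι × ι => p.1 ≠ p.2 ∧ part p.1 = part p.2)) ×ˢ univ) :
    ∑ x ∈ E0, ((E0.filter (fun y => color y.1.1 = color x.1.1 ∧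
      wreEnd u b y = wreEnd u b x)).card : ℝ) ≤ (E0.card : ℝ) * M := by
  classical
  set Ps := (univ.filter (fun p : ι × ι => p.1 ≠ p.2 ∧ part p.1 = part p.2)) with hPs
  have hcardE : (E0.card : ℝ) = Ps.card * ((ℓ * n ^ ℓ : ℕ) : ℝ) ^ m := by
    rw [hE0, Finset.card_product]
    simp
  have hdeg : ∀ x ∈ E0, ((E0.filter (fun y => color y.1.1 = color x.1.1 ∧
      wreEnd u b y = wreEnd u b x)).card) ≤
      ∑ p2 ∈ univ.filter (fun p2 : ι × ι => part p2.1 = part p2.2 ∧ color p2.1 = color x.1.1),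
        (univ.filter (fun w2 : Fin m → (Fin ℓ × (Fin ℓ → Fin n)) => (fun a => wreUpd (x.2 a) (wrePat u b x.1 a)) =
          (fun a => wreUpd (w2 a) (wrePat u b p2 a)))).card := by
    intro x hx
    rw [Finset.card_eq_sum_card_fiberwise (f := fun y => y.1)
      (t := univ.filter (fun p2 : ι × ι => part p2.1 = part p2.2 ∧ color p2.1 = color x.1.1))]
    · apply Finset.sum_le_sum
      intro p2 _
      apply Finset.card_le_card_of_injOn (fun y => y.2)
      · rintro ⟨p3, w3⟩ hy
        simp only [coe_filter, Set.mem_ofPred_eq, mem_univ, true_and, mem_filter] at hy ⊢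
        obtain ⟨⟨_, _, h3⟩, rfl⟩ := hy
        exact h3.symm
      · intro y hy z hz hyz
        simp only [coe_filter, Set.mem_ofPred_eq] at hy hz
        exact Prod.ext (hy.2.trans hz.2.symm) hyz
    · intro y hy
      simp only [coe_filter, Set.mem_ofPred_eq, hE0, hPs, mem_product, mem_filter, mem_univ,
        true_and, and_true] at hy ⊢
      exact ⟨hy.1.2, hy.2.1⟩
  calc _ ≤ ∑ x ∈ E0, ∑ p2 ∈ univ.filter (fun p2 : ι × ι => part p2.1 = part p2.2 ∧ color p2.1 = color x.1.1),
        ((univ.filter (fun w2 : Fin m → (Fin ℓ × (Fin ℓ → Fin n)) => (fun a => wreUpd (x.2 a) (wrePat u b x.1 a)) =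
          (fun a => wreUpd (w2 a) (wrePat u b p2 a)))).card : ℝ) := by
        apply Finset.sum_le_sum
        intro x hx
        exact_mod_cast hdeg x hx
    _ = ∑ p ∈ Ps, ∑ p2 ∈ univ.filter (fun p2 : ι × ι => part p2.1 = part p2.2 ∧ color p2.1 = color p.1),
        (((univ : Finset ((Fin m → (Fin ℓ × (Fin ℓ → Fin n))) × (Fin m → (Fin ℓ × (Fin ℓ → Fin n))))).filter
      (fun x => (fun a => wreUpd (x.1 a) (wrePat u b p a)) =
        (fun a => wreUpd (x.2 a) (wrePat u b p2 a)))).card : ℝ) := by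
        rw [hE0, Finset.sum_product]
        apply Finset.sum_congr rfl
        intro p _
        dsimp only
        refine (Finset.sum_comm (t := univ.filter (fun p2 : ι × ι =>
          part p2.1 = part p2.2 ∧ color p2.1 = color p.1))).trans ?_
        apply Finset.sum_congr rfl
        intro p2 _
        norm_cast
        simp only [Finset.card_filter]
        rw [Fintype.sum_prod_type]
    _ ≤ ∑ p ∈ Ps, ∑ p2 ∈ univ.filter (fun p2 : ι × ι => part p2.1 = part p2.2 ∧ color p2.1 = color p.1),
        ((ℓ * n ^ ℓ : ℕ) : ℝ) ^ m * (∏ a, ((if wrePat u b p a = wrePat u b p2 a then (n:ℝ) else 0) + ℓ)) := by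
        apply Finset.sum_le_sum
        intro p _
        apply Finset.sum_le_sum
        intro p2 _
        have := wre_blocks (ℓ := ℓ) (wrePat u b p) (wrePat u b p2)
        refine le_trans (Nat.cast_le.mpr this) (le_of_eq ?_)
        push_cast
        rfl
    _ ≤ ∑ p ∈ Ps, ((ℓ * n ^ ℓ : ℕ) : ℝ) ^ m * M := by
        apply Finset.sum_le_sum
        intro p hp
        rw [← Finset.mul_sum]
        apply mul_le_mul_of_nonneg_left _ (by positivity)
        exact h p (mem_filter.mp hp).2.2
    _ = _ := by
        rw [Finset.sum_const, nsmul_eq_mul, hcardE]; ring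

theorem wre_end_swap {n m ℓ : ℕ} {ι : Type} (u : ι → Fin m → Fin n) (b : Bool)
    (p : ι × ι) (w : Fin m → (Fin ℓ × (Fin ℓ → Fin n))) :
    wreEnd u b (p.swap, w) = wreEnd u (!b) (p, w) := by
  funext a
  simp only [wreEnd, wrePat, Prod.fst_swap, Prod.snd_swap]
  cases b <;> cases (decide (a.val % 2 = 0)) <;> simp

/-- Markov: the number of elements where a nonnegative function exceeds 8 times the mean. -/
theorem wre_markov {α : Type} (E : Finset α) (f : α → ℝ) (M : ℝ) (hM : 0 < M) (hf : ∀ x, 0 ≤ f x)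
    [DecidablePred fun x => 8 * M < f x]
    (h : ∑ x ∈ E, f x ≤ E.card * M) :
    ((E.filter (fun x => 8 * M < f x)).card : ℝ) ≤ E.card / 8 := by
  have h1 : ((E.filter (fun x => 8 * M < f x)).card : ℝ) * (8 * M) ≤ ∑ x ∈ E, f x := by
    calc _ = ∑ x ∈ E.filter (fun x => 8 * M < f x), (8 * M) := by simp
      _ ≤ ∑ x ∈ E.filter (fun x => 8 * M < f x), f x :=
          Finset.sum_le_sum (fun x hx => (mem_filter.mp hx).2.le)
      _ ≤ _ := Finset.sum_le_sum_of_subset_of_nonneg (filter_subset _ _) (fun _ _ _ => hf _)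
  have h2 : ((E.filter (fun x => 8 * M < f x)).card : ℝ) * 8 ≤ E.card := by
    by_contra hc
    push Not at hc
    nlinarith
  linarith


/-- parity vector of a vertex -/
def wrePhi {n m ℓ : ℕ} (x : Fin m → Fin ℓ → Fin n) : Fin n → ZMod 2 :=
  fun v => ∑ a, ∑ i, if x a i = v then 1 else 0

theorem wre_phi_diff {n m ℓ : ℕ} {ι : Type} (u : ι → Fin m → Fin n) (edge : ι → Finset (Fin n))
    (Q : Finset (Fin n))
    (x : (ι × ι) × (Fin m → (Fin ℓ × (Fin ℓ → Fin n))))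
    (h1 : ∀ v, (∑ a, if u x.1.1 a = v then (1 : ZMod 2) else 0) + wreInd Q v = wreInd (edge x.1.1) v)
    (h2 : ∀ v, (∑ a, if u x.1.2 a = v then (1 : ZMod 2) else 0) + wreInd Q v = wreInd (edge x.1.2) v) :
    wrePhi (wreEnd u true x) - wrePhi (wreEnd u false x) =
      wreInd (edge x.1.1) + wreInd (edge x.1.2) := by
  classical
  funext v
  rw [Pi.add_apply, ← h1, ← h2, Pi.sub_apply]
  have hQ : wreInd Q v + wreInd Q v = 0 := CharTwo.add_self_eq_zero _
  have key : ∀ b, wrePhi (wreEnd u b x) v = ∑ a, ((∑ i ∈ univ.erase (x.2 a).1,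
      if (x.2 a).2 i = v then (1 : ZMod 2) else 0) + if wrePat u b x.1 a = v then 1 else 0) := by
    intro b
    unfold wrePhi
    apply Finset.sum_congr rfl
    intro a _
    rw [← Finset.sum_erase_add _ _ (mem_univ (x.2 a).1)]
    congr 1
    · apply Finset.sum_congr rfl
      intro i hi
      have hh : wreEnd u b x a i = (x.2 a).2 i :=
        Function.update_of_ne (Finset.ne_of_mem_erase hi) _ _
      rw [hh]
    · have hh : wreEnd u b x a (x.2 a).1 = wrePat u b x.1 a := Function.update_self _ _ _
      rw [hh]
  rw [key, key, ← Finset.sum_sub_distrib]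
  calc _ = ∑ a, ((if u x.1.1 a = v then (1 : ZMod 2) else 0) + if u x.1.2 a = v then 1 else 0) := by
        apply Finset.sum_congr rfl
        intro a _
        rw [add_sub_add_left_eq_sub, CharTwo.sub_eq_add]
        by_cases h : a.val % 2 = 0
        · have e1 : wrePat u true x.1 a = u x.1.1 a := by simp [wrePat, h]
          have e2 : wrePat u false x.1 a = u x.1.2 a := by simp [wrePat, h]
          rw [e1, e2]
        · have e1 : wrePat u true x.1 a = u x.1.2 a := by simp [wrePat, h]
          have e2 : wrePat u false x.1 a = u x.1.1 a := by simp [wrePat, h]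
          rw [e1, e2, add_comm]
    _ = _ := by
        rw [Finset.sum_add_distrib]
        linear_combination -hQ

theorem wre_count {n m P ℓ : ℕ} {ι κ : Type} [Fintype ι] [DecidableEq ι] [DecidableEq κ]
    (edge : ι → Finset (Fin n)) (color : ι → κ) (part : ι → Fin P) (Qs : Fin P → Finset (Fin n))
    (u : ι → Fin m → Fin n) (M : ℝ) (hM : 0 < M)
    (hprop : ∀ e f, e ≠ f → color e = color f → Disjoint (edge e) (edge f))
    (hQne : ∀ θ, (Qs θ).Nonempty) (hQ : ∀ e, Qs (part e) ⊆ edge e)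
    (hu : ∀ e v, (∑ a, if u e a = v then (1 : ZMod 2) else 0) + wreInd (Qs (part e)) v =
      wreInd (edge e) v)
    (hno : ∀ e, wreInd (edge e) ∉ Submodule.span (ZMod 2)
      ((fun f => wreInd (edge f)) '' {f | color f ≠ color e}))
    (E0 : Finset ((ι × ι) × (Fin m → (Fin ℓ × (Fin ℓ → Fin n)))))
    (hE0 : E0 = (univ.filter (fun p : ι × ι => p.1 ≠ p.2 ∧ part p.1 = part p.2)) ×ˢ univ)
    (hsec : ∀ b, ∑ x ∈ E0, ((E0.filter (fun y => color y.1.1 = color x.1.1 ∧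
      wreEnd u b y = wreEnd u b x)).card : ℝ) ≤ (E0.card : ℝ) * M) :
    (E0.card : ℝ) / 2 ≤ (32 * M) * (((n ^ ℓ) ^ m : ℕ) * Real.logb 2 ((n ^ ℓ) ^ m : ℕ)) := by
  classical
  have memE : ∀ x, x ∈ E0 ↔ x.1.1 ≠ x.1.2 ∧ part x.1.1 = part x.1.2 := by
    intro x; rw [hE0]; simp [mem_product]
  set f : Bool → ((ι × ι) × (Fin m → (Fin ℓ × (Fin ℓ → Fin n)))) → ℝ := fun b x =>
    ((E0.filter (fun y => color y.1.1 = color x.1.1 ∧ wreEnd u b y = wreEnd u b x)).card : ℝ) with hf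
  set sw : ((ι × ι) × (Fin m → (Fin ℓ × (Fin ℓ → Fin n)))) →
    ((ι × ι) × (Fin m → (Fin ℓ × (Fin ℓ → Fin n)))) := fun x => (x.1.swap, x.2) with hsw
  have swsw : ∀ x, sw (sw x) = x := fun x => by simp [hsw]
  have swinj : Function.Injective sw := fun x y h => by rw [← swsw x, h, swsw]
  have swE : ∀ x, x ∈ E0 → sw x ∈ E0 := by
    intro x hx
    rw [memE] at hx ⊢
    exact ⟨hx.1.symm, hx.2.symm⟩
  have swend : ∀ b x, wreEnd u b (sw x) = wreEnd u (!b) x := fun b x => wre_end_swap u b x.1 x.2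
  have hbad : ∀ b, ((E0.filter (fun x => 8 * M < f b x)).card : ℝ) ≤ E0.card / 8 := fun b =>
    wre_markov E0 (f b) M hM (fun x => by simp only [hf]; positivity) (hsec b)
  have hbad' : ∀ b, ((E0.filter (fun x => 8 * M < f b (sw x))).card : ℝ) ≤ E0.card / 8 := by
    intro b
    refine le_trans ?_ (hbad b)
    norm_cast
    apply Finset.card_le_card_of_injOn sw
    · intro x hx
      simp only [coe_filter, Set.mem_ofPred_eq] at hx ⊢
      exact ⟨swE x hx.1, hx.2⟩
    · exact swinj.injOn
  set F0 := E0.filter (fun x => ∀ b, f b x ≤ 8 * M ∧ f b (sw x) ≤ 8 * M) with hF0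
  have hF0card : (E0.card : ℝ) / 2 ≤ F0.card := by
    have hsub : E0 ⊆ F0 ∪ ((E0.filter (fun x => 8 * M < f true x) ∪
        E0.filter (fun x => 8 * M < f false x)) ∪ (E0.filter (fun x => 8 * M < f true (sw x)) ∪
        E0.filter (fun x => 8 * M < f false (sw x)))) := by
      intro x hx
      simp only [hF0, mem_union, mem_filter, hx, true_and, Bool.forall_bool, ← not_lt]
      tauto
    have h1 := Finset.card_le_card hsub
    have h2 := Finset.card_union_le F0 ((E0.filter (fun x => 8 * M < f true x) ∪
        E0.filter (fun x => 8 * M < f false x)) ∪ (E0.filter (fun x => 8 * M < f true (sw x)) ∪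
        E0.filter (fun x => 8 * M < f false (sw x))))
    have h3 := Finset.card_union_le (E0.filter (fun x => 8 * M < f true x) ∪
        E0.filter (fun x => 8 * M < f false x)) (E0.filter (fun x => 8 * M < f true (sw x)) ∪
        E0.filter (fun x => 8 * M < f false (sw x)))
    have h4 := Finset.card_union_le (E0.filter (fun x => 8 * M < f true x))
        (E0.filter (fun x => 8 * M < f false x))
    have h5 := Finset.card_union_le (E0.filter (fun x => 8 * M < f true (sw x)))
        (E0.filter (fun x => 8 * M < f false (sw x)))
    have h6 : E0.card ≤ F0.card + (((E0.filter (fun x => 8 * M < f true x)).card +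
        (E0.filter (fun x => 8 * M < f false x)).card) +
        ((E0.filter (fun x => 8 * M < f true (sw x))).card +
        (E0.filter (fun x => 8 * M < f false (sw x))).card)) := by omega
    have h7 : (E0.card : ℝ) ≤ F0.card + (((E0.filter (fun x => 8 * M < f true x)).card +
        (E0.filter (fun x => 8 * M < f false x)).card) +
        ((E0.filter (fun x => 8 * M < f true (sw x))).card +
        (E0.filter (fun x => 8 * M < f false (sw x))).card)) := by exact_mod_cast h6
    linarith [hbad true, hbad false, hbad' true, hbad' false]
  have hfirst : ∀ b c v, ((F0.filter (fun x => color x.1.1 = c ∧ wreEnd u b x = v)).card : ℝ) ≤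
      8 * M := by
    intro b c v
    rcases Finset.eq_empty_or_nonempty (F0.filter (fun x => color x.1.1 = c ∧ wreEnd u b x = v))
      with h | ⟨x0, hx0⟩
    · rw [h]; simp only [card_empty, Nat.cast_zero]; positivity
    · have hx := mem_filter.mp hx0
      refine le_trans ?_ ((mem_filter.mp hx.1).2 b).1
      simp only [hf]
      rw [hx.2.1, hx.2.2]
      norm_cast
      exact Finset.card_le_card (Finset.filter_subset_filter _ (Finset.filter_subset _ _))
  have hsecond : ∀ b c v, ((F0.filter (fun x => color x.1.2 = c ∧ wreEnd u b x = v)).card : ℝ) ≤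
      8 * M := by
    intro b c v
    refine le_trans ?_ (hfirst (!b) c v)
    norm_cast
    apply Finset.card_le_card_of_injOn sw
    · intro x hx
      simp only [coe_filter, Set.mem_ofPred_eq] at hx ⊢
      refine ⟨?_, hx.2.1, ?_⟩
      · have h1 := mem_filter.mp hx.1
        rw [hF0, mem_filter]
        refine ⟨swE x h1.1, fun b => ⟨(h1.2 b).2, ?_⟩⟩
        rw [swsw]; exact (h1.2 b).1
      · rw [swend, Bool.not_not]; exact hx.2.2
    · exact swinj.injOn
  have hboth : ∀ b c v, ((F0.filter (fun x => (color x.1.1 = c ∨ color x.1.2 = c) ∧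
      wreEnd u b x = v)).card : ℝ) ≤ 16 * M := by
    intro b c v
    have h1 : F0.filter (fun x => (color x.1.1 = c ∨ color x.1.2 = c) ∧ wreEnd u b x = v) ⊆
        F0.filter (fun x => color x.1.1 = c ∧ wreEnd u b x = v) ∪
        F0.filter (fun x => color x.1.2 = c ∧ wreEnd u b x = v) := by
      intro x hx
      simp only [mem_union, mem_filter] at hx ⊢
      tauto
    have h2 := (Finset.card_le_card h1).trans (Finset.card_union_le _ _)
    have h3 : ((F0.filter (fun x => (color x.1.1 = c ∨ color x.1.2 = c) ∧
      wreEnd u b x = v)).card : ℝ) ≤ (F0.filter (fun x => color x.1.1 = c ∧ wreEnd u b x = v)).card +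
        (F0.filter (fun x => color x.1.2 = c ∧ wreEnd u b x = v)).card := by exact_mod_cast h2
    linarith [hfirst b c v, hsecond b c v]
  set U : κ → Submodule (ZMod 2) (Fin n → ZMod 2) := fun c => Submodule.span (ZMod 2)
      ((fun f => wreInd (edge f)) '' {f | color f ≠ c}) with hU
  have hgU : ∀ c e, color e ≠ c → wreInd (edge e) ∈ U c := fun c e h =>
    Submodule.subset_span ⟨e, h, rfl⟩
  have hdiff : ∀ x ∈ E0, wrePhi (wreEnd u true x) - wrePhi (wreEnd u false x) =
      wreInd (edge x.1.1) + wreInd (edge x.1.2) := by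
    intro x hx
    apply wre_phi_diff u edge (Qs (part x.1.1)) x (hu _)
    rw [((memE x).mp hx).2]; exact hu _
  have hch := wre_charge (wreEnd u true) (wreEnd u false) (fun x => color x.1.1)
    (fun x => color x.1.2) (Ψ := fun c => (Fin n → ZMod 2) ⧸ U c)
    (fun c v => Submodule.Quotient.mk (wrePhi v)) F0 (32 * M)
    (fun c v => by linarith [hboth true c v, hboth false c v]) (by positivity)
    (by
      intro x hx c h1 h2
      rw [Submodule.Quotient.eq, hdiff x (mem_filter.mp hx).1]
      exact (U c).add_mem (hgU c _ h1) (hgU c _ h2))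
    (by
      intro x hx h
      rw [Submodule.Quotient.eq, hdiff x (mem_filter.mp hx).1] at h
      have hx' := (memE x).mp (mem_filter.mp hx).1
      have hcne : color x.1.2 ≠ color x.1.1 := by
        intro hc
        have h1 := hprop _ _ hx'.1 hc.symm
        obtain ⟨v, hv⟩ := hQne (part x.1.1)
        exact Finset.disjoint_left.mp h1 (hQ _ hv) (hQ x.1.2 (hx'.2 ▸ hv))
      exact hno x.1.1 (((U _).add_mem_iff_left (hgU _ _ hcne)).mp h))
    _ univ rfl F0 subset_rfl (by simp)
  have hN : (univ : Finset (Fin m → Fin ℓ → Fin n)).card = (n ^ ℓ) ^ m := by simp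
  rw [hN] at hch
  exact hF0card.trans hch


theorem wre_u_sum {n m : ℕ} (E Q : Finset (Fin n)) (hQ : Q ⊆ E) (u : Fin m → Fin n)
    (hui : Function.Injective u) (him : univ.image u = E \ Q) (v : Fin n) :
    (∑ a, if u a = v then (1 : ZMod 2) else 0) + wreInd Q v = wreInd E v := by
  classical
  have h1 : (∑ a, if u a = v then (1 : ZMod 2) else 0) = ∑ x ∈ E \ Q, if x = v then (1 : ZMod 2) else 0 := by
    rw [← him, Finset.sum_image hui.injOn]
  rw [h1, Finset.sum_ite_eq']
  simp only [wreInd, mem_sdiff]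
  by_cases h2 : v ∈ Q
  · simp [h2, hQ h2]
  · simp [h2]

theorem wre_degree {n q : ℕ} {ι : Type} [Fintype ι] (edge : ι → Finset (Fin n))
    (hq : ∀ e, (edge e).card = q) : q * Fintype.card ι ≤ n * iMaxCodeg edge 1 := by
  classical
  calc q * Fintype.card ι = ∑ e : ι, (edge e).card := by simp [hq, mul_comm]
    _ = ∑ e : ι, ∑ v : Fin n, if v ∈ edge e then 1 else 0 := by simp
    _ = ∑ v : Fin n, ∑ e : ι, if v ∈ edge e then 1 else 0 := Finset.sum_comm
    _ ≤ ∑ v : Fin n, iMaxCodeg edge 1 := by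
        apply Finset.sum_le_sum
        intro v _
        have := wre_codeg edge {v}
        rw [Finset.card_singleton] at this
        refine le_trans (le_of_eq ?_) this
        rw [← Finset.card_filter]
        congr 1
        ext e
        simp
    _ = _ := by simp

theorem wre_num {n q t m : ℕ} (hn : 2 ≤ n) (hq : Odd q) (hq3 : 3 ≤ q) (hm : t + m = q) (ℓ : ℕ)
    (hℓ : (n : ℝ) ^ ((1 : ℝ) - 2 / (q : ℝ)) ≤ ℓ) (d : ℕ → ℝ) (hd : ∀ r, 0 ≤ d r)
    (hanti : ∀ r s, r ≤ s → d s ≤ d r) (hdt : 0 < d t) (hgood : GoodIndex n q d t) :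
    (∀ s r, (s ≤ (m + 1) / 2 ∧ r ≤ m / 2) ∨ (s ≤ m / 2 ∧ r ≤ (m + 1) / 2) →
      d (t + r) * ((n : ℝ) / ℓ) ^ (s + r) ≤ n * d t) ∧
    (∀ r, 1 ≤ r → r ≤ (m + 1) / 2 → d r * ((n : ℝ) / ℓ) ^ r ≤ n * d t) := by
  have hn0 : (0:ℝ) < n := by positivity
  have hn1 : (1:ℝ) ≤ n := by exact_mod_cast (by omega : 1 ≤ n)
  have hq0 : (0:ℝ) < q := by positivity
  have hmq : (t:ℝ) + m = q := by exact_mod_cast hm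
  have hpos : (0:ℝ) < (n : ℝ) ^ ((1 : ℝ) - 2 / (q : ℝ)) := by positivity
  have hnl : (n : ℝ) / ℓ ≤ (n : ℝ) ^ (2 / (q : ℝ)) := by
    rw [div_le_iff₀ (lt_of_lt_of_le hpos hℓ)]
    calc (n:ℝ) = (n : ℝ) ^ (2 / (q : ℝ)) * (n : ℝ) ^ ((1 : ℝ) - 2 / (q : ℝ)) := by
          rw [← Real.rpow_add hn0]; simp
      _ ≤ _ := by gcongr
  have hpw : ∀ k : ℕ, ((n : ℝ) / ℓ) ^ k ≤ (n : ℝ) ^ (2 / (q : ℝ) * k) := by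
    intro k
    rw [Real.rpow_mul hn0.le, Real.rpow_natCast]
    exact pow_le_pow_left₀ (by positivity) hnl k
  have key : ∀ (r k : ℕ) (x : ℝ), d r / d t ≤ (n : ℝ) ^ x → x + 2 / (q : ℝ) * k ≤ 1 →
      d r * ((n : ℝ) / ℓ) ^ k ≤ n * d t := by
    intro r k x h1 h2
    rw [div_le_iff₀ hdt] at h1
    calc d r * ((n : ℝ) / ℓ) ^ k ≤ ((n : ℝ) ^ x * d t) * (n : ℝ) ^ (2 / (q : ℝ) * k) := by
          apply mul_le_mul h1 (hpw k) (by positivity) (by positivity)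
      _ = (n : ℝ) ^ (x + 2 / (q : ℝ) * k) * d t := by rw [Real.rpow_add hn0]; ring
      _ ≤ (n : ℝ) ^ (1:ℝ) * d t := by
          gcongr
      _ = _ := by rw [Real.rpow_one]
  obtain ⟨g1, g2, -, -⟩ := hgood
  have hA : ∀ s r, s ≤ (m + 1) / 2 → r ≤ m / 2 →
      d (t + r) * ((n : ℝ) / ℓ) ^ (s + r) ≤ n * d t := by
    intro s r hs hr
    refine key _ _ _ (g2 (t + r) (by omega) (by omega)) ?_
    have hev : (t:ℝ) - (if Even t then 1 else 0) + 2 * s ≤ q := by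
      split_ifs with h
      · have : t + 2 * s ≤ q + 1 := by omega
        have : (t:ℝ) + 2 * s ≤ q + 1 := by exact_mod_cast this
        linarith
      · have : t + 2 * s ≤ q := by
          have h1 := Nat.not_even_iff_odd.mp h
          obtain ⟨a, ha⟩ := h1
          obtain ⟨b, hb⟩ := hq
          omega
        have : (t:ℝ) + 2 * s ≤ q := by exact_mod_cast this
        linarith
    have : -(2 / (q:ℝ)) * (((t + r : ℕ):ℝ) - t) + 1 / (q:ℝ) * ((t:ℝ) - if Even t then 1 else 0) +
        2 / (q:ℝ) * ((s + r : ℕ):ℝ) = ((t:ℝ) - (if Even t then 1 else 0) + 2 * s) / q := by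
      push_cast
      field_simp
      ring
    rw [this, div_le_one hq0]
    exact hev
  constructor
  · rintro s r (⟨hs, hr⟩ | ⟨hs, hr⟩)
    · exact hA s r hs hr
    · by_cases h : r ≤ m / 2
      · exact hA s r (by omega) h
      · have h1 := hA (s + 1) (r - 1) (by omega) (by omega)
        have h2 : s + 1 + (r - 1) = s + r := by omega
        rw [h2] at h1
        refine le_trans ?_ h1
        apply mul_le_mul_of_nonneg_right _ (by positivity)
        exact hanti _ _ (by omega)
  · intro r h1 h2
    refine key _ _ _ (g1 r h1 (by omega)) ?_
    apply le_of_eq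
    ring

theorem stmt3 :
    ∀ q : ℕ, Odd q → 3 ≤ q →
    ∃ A : ℝ, 0 < A ∧
      ∀ t : ℕ, 1 ≤ t → t ≤ q →
      ∀ n : ℕ, 2 ≤ n →
      ∀ (ι κ : Type) [Fintype ι] [DecidableEq κ],
      ∀ (edge : ι → Finset (Fin n)) (color : ι → κ),
        (∀ e, (edge e).card = q) →
        (∀ e f, e ≠ f → color e = color f → Disjoint (edge e) (edge f)) →
        iASR q t edge →
        A * (n : ℝ) ^ ((1 : ℝ) - 2 / (q : ℝ)) * Real.log n ≤
          (q : ℝ) * (Fintype.card ι : ℝ) / (n : ℝ) →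
        ∃ S : Finset ι, S.Nonempty ∧
          (∀ v : Fin n, Even ((S.filter (fun e => v ∈ edge e)).card)) ∧
          ∃ c : κ, (S.filter (fun e => color e = c)).card = 1 := by
  intro q hqodd hq3
  refine ⟨4096 * 4 ^ q * (q:ℝ) ^ 2, by positivity, ?_⟩
  intro t ht1 htq n hn ι κ _ _ edge color hcard hprop hasr havg
  classical
  by_contra hcon
  have hno : ∀ e, wreInd (edge e) ∉ Submodule.span (ZMod 2)
      ((fun f => wreInd (edge f)) '' {f | color f ≠ color e}) := fun e he =>
    hcon (wre_cover edge color e he)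
  obtain ⟨P, part, Qs, hQc, hQ, hsize, hgood⟩ := hasr
  obtain ⟨m, hm⟩ := Nat.exists_eq_add_of_le htq
  have hn0 : (0:ℝ) < n := by positivity
  have hn1 : (1:ℝ) ≤ n := by exact_mod_cast (by omega : 1 ≤ n)
  have hn2 : (2:ℝ) ≤ n := by exact_mod_cast hn
  have hq0 : (0:ℝ) < q := by positivity
  have hq3' : (3:ℝ) ≤ q := by exact_mod_cast hq3
  set x : ℝ := (n : ℝ) ^ ((1 : ℝ) - 2 / (q : ℝ)) with hx
  have hexp : 0 ≤ (1 : ℝ) - 2 / (q : ℝ) := by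
    rw [sub_nonneg, div_le_one hq0]; linarith
  have hx1 : 1 ≤ x := Real.one_le_rpow hn1 hexp
  have hxn : x ≤ n := by
    calc x ≤ (n:ℝ) ^ (1:ℝ) := by
          apply Real.rpow_le_rpow_of_exponent_le hn1
          have : 0 ≤ 2 / (q:ℝ) := by positivity
          linarith
      _ = n := Real.rpow_one _
  have hlog2 : (0.69:ℝ) < Real.log 2 := by linarith [Real.log_two_gt_d9]
  have hlogn : Real.log 2 ≤ Real.log n := Real.log_le_log (by norm_num) hn2
  have h4q : (1:ℝ) ≤ 4 ^ q := one_le_pow₀ (by norm_num)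
  set dt : ℝ := (iMaxCodeg edge t : ℝ) with hdt
  -- first degree
  have hd1 : 4096 * 4 ^ q * (q:ℝ) ^ 2 * x * Real.log n ≤ (iMaxCodeg edge 1 : ℝ) := by
    refine havg.trans ?_
    rw [div_le_iff₀ hn0]
    have := wre_degree edge hcard
    rw [mul_comm (iMaxCodeg edge 1 : ℝ)]
    exact_mod_cast this
  have hA4 : (36 : ℝ) ≤ 4 ^ q * (q:ℝ) ^ 2 * 4096 := by nlinarith
  have hd1' : 4 * x ≤ (iMaxCodeg edge 1 : ℝ) := by
    refine le_trans ?_ hd1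
    have h1 : 36 * 0.69 ≤ (4096 * 4 ^ q * (q:ℝ) ^ 2) * Real.log n := by
      apply mul_le_mul (by linarith) (by linarith) (by norm_num) (by positivity)
    nlinarith
  have hdt4 : 4 ≤ dt := by
    obtain ⟨-, -, g3, g4⟩ := hgood
    rcases lt_trichotomy (2 * t) q with h | h | h
    · have h1 := g3 h
      refine le_trans ?_ h1
      have hxx : 1 ≤ x * (n : ℝ) ^ (-(2 / (q : ℝ)) * ((t : ℝ) - 1)) := by
        rw [hx, ← Real.rpow_add hn0]
        apply Real.one_le_rpow hn1
        have h2 : (2:ℝ) * t ≤ q := by exact_mod_cast h.le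
        have : 1 - 2 / (q:ℝ) + -(2 / (q:ℝ)) * ((t:ℝ) - 1) = (q - 2 * t) / q := by
          field_simp; ring
        rw [this]
        apply div_nonneg <;> linarith
      calc (4:ℝ) ≤ 4 * (x * (n : ℝ) ^ (-(2 / (q : ℝ)) * ((t : ℝ) - 1))) := by linarith
        _ = (4 * x) * (n : ℝ) ^ (-(2 / (q : ℝ)) * ((t : ℝ) - 1)) := by ring
        _ ≤ _ := by gcongr
    · obtain ⟨a, ha⟩ := hqodd; omega
    · have h1 := g4 h
      refine le_trans ?_ h1
      have hxx : x * (n : ℝ) ^ (-1 + 2 / (q : ℝ)) = 1 := by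
        rw [hx, ← Real.rpow_add hn0]
        ring_nf; simp
      calc (4:ℝ) = 4 * (x * (n : ℝ) ^ (-1 + 2 / (q : ℝ))) := by rw [hxx]; norm_num
        _ = (4 * x) * (n : ℝ) ^ (-1 + 2 / (q : ℝ)) := by ring
        _ ≤ _ := by gcongr
  -- ell
  set ℓ : ℕ := ⌈x⌉₊ with hℓ
  have hℓx : x ≤ ℓ := Nat.le_ceil x
  have hℓ2 : (ℓ:ℝ) ≤ 2 * x := by
    have := Nat.ceil_lt_add_one (by linarith : 0 ≤ x)
    linarith
  have hℓn : ℓ ≤ n := Nat.ceil_le.mpr hxn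
  have hℓ1 : 1 ≤ ℓ := by
    have : (1:ℝ) ≤ ℓ := hx1.trans hℓx
    exact_mod_cast this
  obtain ⟨N1, N2⟩ := wre_num hn hqodd hq3 hm.symm ℓ hℓx (fun r => (iMaxCodeg edge r : ℝ))
    (fun r => by positivity) (fun r s h => by exact_mod_cast wre_anti edge h) (by linarith) hgood
  -- enumeration
  have hmc : ∀ e, (edge e \ Qs (part e)).card = m := by
    intro e
    rw [Finset.card_sdiff_of_subset (hQ e), hcard, hQc]; omega
  set u : ι → Fin m → Fin n := fun e => (edge e \ Qs (part e)).orderEmbOfFin (hmc e) with hu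
  have hui : ∀ e, Function.Injective (u e) := fun e =>
    ((edge e \ Qs (part e)).orderEmbOfFin (hmc e)).injective
  have hue : ∀ e a, u e a ∈ edge e \ Qs (part e) := fun e a => Finset.orderEmbOfFin_mem _ (hmc e) a
  have hus : ∀ e v, (∑ a, if u e a = v then (1 : ZMod 2) else 0) + wreInd (Qs (part e)) v =
      wreInd (edge e) v := fun e v =>
    wre_u_sum _ _ (hQ e) (u e) (hui e) (Finset.image_orderEmbOfFin_univ _ (hmc e)) v
  have hpart : ∀ θ, (univ.filter (fun e => part e = θ)).card ≤ iMaxCodeg edge t := fun θ => by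
    exact (Nat.cast_le (α := ℝ)).mp (hsize θ).2
  set M : ℝ := 4 ^ m * (ℓ : ℝ) ^ m * (2 * (n * dt)) with hM
  have hℓ0 : (0:ℝ) < ℓ := by linarith
  have hMpos : 0 < M := by positivity
  set E0 : Finset ((ι × ι) × (Fin m → (Fin ℓ × (Fin ℓ → Fin n)))) :=
    (univ.filter (fun p : ι × ι => p.1 ≠ p.2 ∧ part p.1 = part p.2)) ×ˢ univ with hE0
  have hmain := wre_count edge color part Qs u M hMpos hprop
    (fun θ => by rw [← Finset.card_pos, hQc]; omega) hQ hus hno E0 hE0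
    (fun b => wre_second color part u b M (fun p hp =>
      wre_pairs_sum color part u b _ hℓ1 hℓn p (fun J =>
        wre_pairs edge color part Qs u b ht1 hprop hQc hQ hui hue hpart N1 N2 p hp J)) E0 hE0)
  -- counting pairs
  have hPs : (Fintype.card ι : ℝ) * (dt / 4) ≤
      ((univ.filter (fun p : ι × ι => p.1 ≠ p.2 ∧ part p.1 = part p.2)).card : ℝ) := by
    have h1 : (univ.filter (fun p : ι × ι => p.1 ≠ p.2 ∧ part p.1 = part p.2)).card =
        ∑ e : ι, (univ.filter (fun f => e ≠ f ∧ part e = part f)).card := by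
      simp only [Finset.card_filter]
      rw [Fintype.sum_prod_type]
    rw [h1]
    push_cast
    calc _ = ∑ e : ι, dt / 4 := by simp
      _ ≤ _ := by
        apply Finset.sum_le_sum
        intro e _
        have h2 := (hsize (part e)).1
        have h3 : univ.filter (fun f => e ≠ f ∧ part e = part f) =
            (univ.filter (fun f => part f = part e)).erase e := by
          ext f
          simp only [mem_filter, mem_univ, true_and, mem_erase]
          constructor
          · rintro ⟨a, b⟩; exact ⟨a.symm, b.symm⟩
          · rintro ⟨a, b⟩; exact ⟨a.symm, b.symm⟩
        have h4 : (univ.filter (fun f => e ≠ f ∧ part e = part f)).card + 1 =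
            (univ.filter (fun f => part f = part e)).card := by
          rw [h3]; exact Finset.card_erase_add_one (by simp)
        have h5 : ((univ.filter (fun f => e ≠ f ∧ part e = part f)).card : ℝ) + 1 =
            (univ.filter (fun f => part f = part e)).card := by exact_mod_cast h4
        linarith
  have hE0card : (E0.card : ℝ) =
      ((univ.filter (fun p : ι × ι => p.1 ≠ p.2 ∧ part p.1 = part p.2)).card : ℝ) *
      ((ℓ:ℝ) ^ m * (((n ^ ℓ) ^ m : ℕ) : ℝ)) := by
    rw [hE0, Finset.card_product]
    simp [mul_pow]
  have hlogN : Real.logb 2 (((n ^ ℓ) ^ m : ℕ) : ℝ) = m * (ℓ * (Real.log n / Real.log 2)) := by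
    push_cast
    rw [Real.logb_pow, Real.logb_pow, Real.logb]
  rw [hE0card, hlogN, hM] at hmain
  set N : ℝ := (((n ^ ℓ) ^ m : ℕ) : ℝ) with hN
  have hNpos : 0 < N := by rw [hN]; exact_mod_cast (by positivity)
  have hdt0 : 0 < dt := by linarith
  set PP : ℝ := ((univ.filter (fun p : ι × ι => p.1 ≠ p.2 ∧ part p.1 = part p.2)).card : ℝ)
  set R : ℝ := Real.log n / Real.log 2 with hR
  have hm2 : PP ≤ 128 * 4 ^ m * n * dt * (m * (ℓ * R)) := by
    have hpos : 0 < (ℓ:ℝ) ^ m * N / 2 := by positivity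
    apply le_of_mul_le_mul_right _ hpos
    calc PP * ((ℓ:ℝ) ^ m * N / 2) = PP * ((ℓ:ℝ) ^ m * N) / 2 := by ring
      _ ≤ _ := hmain
      _ = _ := by ring
  have hcardι : (Fintype.card ι : ℝ) ≤ 512 * 4 ^ m * n * (m * (ℓ * R)) := by
    apply le_of_mul_le_mul_right _ (by positivity : 0 < dt / 4)
    refine hPs.trans (hm2.trans (le_of_eq ?_))
    ring
  have hRn : R ≤ 2 * Real.log n := by
    rw [hR, div_le_iff₀ (by linarith)]
    nlinarith
  have hlogpos : 0 < Real.log n := by linarith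
  have hR0 : 0 ≤ R := by rw [hR]; apply div_nonneg <;> linarith
  have hmq : (m:ℝ) ≤ q := by exact_mod_cast (by omega : m ≤ q)
  have hcard2 : (Fintype.card ι : ℝ) ≤ 512 * 4 ^ q * n * (q * ((2 * x) * (2 * Real.log n))) := by
    refine hcardι.trans ?_
    have h44 : (4:ℝ) ^ m ≤ 4 ^ q := pow_le_pow_right₀ (by norm_num) (by omega)
    gcongr
  have hfin : (q:ℝ) * (Fintype.card ι : ℝ) / n ≤ 2048 * 4 ^ q * (q:ℝ) ^ 2 * x * Real.log n := by
    rw [div_le_iff₀ hn0]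
    calc _ ≤ (q:ℝ) * (512 * 4 ^ q * n * (q * ((2 * x) * (2 * Real.log n)))) := by gcongr
      _ = _ := by ring
  have hlast : 0 < 2048 * 4 ^ q * (q:ℝ) ^ 2 * x * Real.log n := by positivity
  linarith
end

section
/- Let q ≥ 3 be odd. There is a constant C > 0 depending only on q such that the following holds for all n ≥ 2: let H_1,…,H_k be q-uniform matchings on [n] whose disjoint union H is t-approximately strongly regular with co-degree values d_1 ≥ d_2 ≥ ⋯ ≥ d_q (d_r := d_{H,r}), and suppose k ≥ d_1 ≥ n^{1−2/q}·log n. Then E_{b}[val(Ψ_b)²] ≤ 2|H|²/d_t + C·|H|·n·√(k·n^{1−2/q})·log n, where b is uniform on {±1}^k. -/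
open Finset

/-- Co-degree of a set `Q` in a hypergraph given as a multiset of hyperedges:
the number of hyperedges (with multiplicity) containing `Q`. -/
def mCodeg {n : ℕ} (H : Multiset (Finset (Fin n))) (Q : Finset (Fin n)) : ℕ :=
  (H.filter (fun C => Q ⊆ C)).card

/-- `d_{H,r}`: maximum co-degree over all `r`-element subsets of `[n]`. -/
def mMaxCodeg {n : ℕ} (H : Multiset (Finset (Fin n))) (r : ℕ) : ℕ :=
  (Finset.univ.filter (fun Q : Finset (Fin n) => Q.card = r)).sup (mCodeg H)

/-- `t`-approximate strong regularity: `H` can be partitioned into pieces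
`Hs θ`, each consisting of hyperedges containing a fixed `t`-element set `Qs θ`,
each of size between `d_{H,t}/2` and `d_{H,t}`, and `t` is a good index for the
co-degree sequence of `H`. -/
def mASR {n : ℕ} (q t : ℕ) (H : Multiset (Finset (Fin n))) : Prop :=
  ∃ (p : ℕ) (Hs : Fin p → Multiset (Finset (Fin n))) (Qs : Fin p → Finset (Fin n)),
    H = ∑ θ : Fin p, Hs θ ∧
    (∀ θ, (Qs θ).card = t ∧ ∀ C ∈ Hs θ, Qs θ ⊆ C) ∧
    (∀ θ, (mMaxCodeg H t : ℝ) / 2 ≤ ((Hs θ).card : ℝ) ∧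
      ((Hs θ).card : ℝ) ≤ (mMaxCodeg H t : ℝ)) ∧
    GoodIndex n q (fun r => (mMaxCodeg H r : ℝ)) t


/-- average over the sign cube -/
noncomputable def Ex {k : ℕ} (f : (Fin k → ℤˣ) → ℝ) : ℝ := (2 ^ k : ℝ)⁻¹ * ∑ b, f b

/-- real sign -/
def sg {k : ℕ} (b : Fin k → ℤˣ) (i : Fin k) : ℝ := ((b i : ℤ) : ℝ)

lemma sg_mul_self {k : ℕ} (b : Fin k → ℤˣ) (i : Fin k) : sg b i * sg b i = 1 := by
  unfold sg
  rcases Int.units_eq_one_or (b i) with h | h <;> simp [h]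

lemma sg_abs {k : ℕ} (b : Fin k → ℤˣ) (i : Fin k) : |sg b i| = 1 := by
  unfold sg
  rcases Int.units_eq_one_or (b i) with h | h <;> simp [h]

lemma Ex_sum {k : ℕ} {α : Type*} (s : Finset α) (f : α → (Fin k → ℤˣ) → ℝ) :
    Ex (fun b => ∑ a ∈ s, f a b) = ∑ a ∈ s, Ex (f a) := by
  unfold Ex
  rw [Finset.sum_comm, Finset.mul_sum]

lemma Ex_mul {k : ℕ} (c : ℝ) (f : (Fin k → ℤˣ) → ℝ) :
    Ex (fun b => c * f b) = c * Ex f := by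
  unfold Ex
  rw [← Finset.mul_sum]; ring

lemma Ex_mono {k : ℕ} {f g : (Fin k → ℤˣ) → ℝ} (h : ∀ b, f b ≤ g b) : Ex f ≤ Ex g := by
  unfold Ex
  exact mul_le_mul_of_nonneg_left (Finset.sum_le_sum fun b _ => h b) (by positivity)

lemma card_cube (k : ℕ) : (Fintype.card (Fin k → ℤˣ) : ℝ) = 2 ^ k := by
  simp

lemma Ex_const {k : ℕ} (c : ℝ) : Ex (fun _ : Fin k → ℤˣ => c) = c := by
  unfold Ex
  rw [Finset.sum_const, Finset.card_univ, nsmul_eq_mul, card_cube]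
  field_simp

lemma Ex_comm {k l : ℕ} (f : (Fin k → ℤˣ) → (Fin l → ℤˣ) → ℝ) :
    Ex (fun b => Ex (fun c => f b c)) = Ex (fun c => Ex (fun b => f b c)) := by
  unfold Ex
  simp only [Finset.mul_sum]
  rw [Finset.sum_comm]
  refine Finset.sum_congr rfl fun x _ => Finset.sum_congr rfl fun y _ => by ring

lemma Ex_pow_le {k : ℕ} (f : (Fin k → ℤˣ) → ℝ) (M : ℕ) (hM : 1 ≤ M) :
    (Ex f) ^ (2 ^ M) ≤ Ex (fun b => f b ^ (2 ^ M)) := by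
  unfold Ex
  have he : Even (2 ^ M) := (Nat.even_pow.2 ⟨even_two, by omega⟩)
  have := Real.pow_arith_mean_le_arith_mean_pow_of_even Finset.univ
    (fun _ : Fin k → ℤˣ => (2 ^ k : ℝ)⁻¹) f (fun _ _ => by positivity)
    (by rw [Finset.sum_const, Finset.card_univ, nsmul_eq_mul, card_cube]; field_simp) he
  simpa only [Finset.mul_sum] using this

lemma Ex_char {k : ℕ} (A : Finset (Fin k)) (hA : A.Nonempty) :
    Ex (fun b => ∏ i ∈ A, sg b i) = 0 := by
  obtain ⟨i, hi⟩ := hA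
  unfold Ex
  have : ∑ b : Fin k → ℤˣ, ∏ i ∈ A, sg b i = 0 := by
    have h2 := (Finset.prod_univ_sum (fun _ : Fin k => (univ : Finset ℤˣ))
      (fun i u => if i ∈ A then ((u : ℤ) : ℝ) else 1))
    rw [Fintype.piFinset_univ] at h2
    have h3 : ∀ b : Fin k → ℤˣ, ∏ i ∈ A, sg b i = ∏ i, if i ∈ A then ((b i : ℤ) : ℝ) else 1 := by
      intro b
      rw [Finset.prod_ite_mem]; simp [sg]
    simp only [h3]
    rw [← h2]
    apply Finset.prod_eq_zero (Finset.mem_univ i)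
    simp [hi]
  rw [this, mul_zero]

lemma trace_moment {U : Type*} [Fintype U] [DecidableEq U] {k : ℕ}
    (A : Fin k → Matrix U U ℝ) (G : U → ℝ) (hG : ∀ u, 0 < G u) (ε : ℝ) (hε : 0 < ε)
    (h1 : ∀ u, ∑ i, ∑ v, |A i u v| ≤ G u) (h2 : ∀ i u, ∑ v, |A i u v| ≤ ε * G u)
    (B : (Fin k → ℤˣ) → Matrix U U ℝ)
    (hB : ∀ b u v, B b u v = ∑ i, sg b i * (A i u v / (√(G u) * √(G v))))
    (P : ℕ) (hP : 0 < P) :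
    ∀ (N : ℕ) (S : Finset (Fin k)) (u w : U), N + S.card ≤ P →
      |Ex (fun b => (∏ i ∈ S, sg b i) * (B b ^ N) u w)| ≤
        √(P * ε) ^ S.card * (2 * √(P * ε)) ^ N * (√(G u) / √(G w)) := by
  have hx : 0 < √(P * ε) := by positivity
  set x := √(P * ε) with hxdef
  have hxx : x * x = P * ε := Real.mul_self_sqrt (by positivity)
  intro N
  induction N with
  | zero =>
    intro S u w _
    have hs : 0 < √(G u) := Real.sqrt_pos.2 (hG u)
    have hs' : 0 < √(G w) := Real.sqrt_pos.2 (hG w)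
    simp only [pow_zero, Matrix.one_apply]
    by_cases huw : u = w
    · subst huw
      simp only [if_true, mul_one]
      rcases S.eq_empty_or_nonempty with rfl | hS
      · simp [Ex_const, div_self hs.ne']
      · rw [Ex_char S hS]; simp; positivity
    · simp [huw, Ex_const]; positivity
  | succ N ih =>
    intro S u w hN
    have hsu : 0 < √(G u) := Real.sqrt_pos.2 (hG u)
    have hsw : 0 < √(G w) := Real.sqrt_pos.2 (hG w)
    have key : Ex (fun b => (∏ i ∈ S, sg b i) * (B b ^ (N+1)) u w) =
        ∑ i, ∑ v, (A i u v / (√(G u) * √(G v))) *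
          Ex (fun b => (∏ j ∈ (if i ∈ S then S.erase i else insert i S), sg b j) * (B b ^ N) v w) := by
      rw [← Finset.sum_congr rfl (fun i _ => Finset.sum_congr rfl fun v _ => Ex_mul _ _)]
      rw [← Finset.sum_congr rfl (fun i _ => Ex_sum _ _), ← Ex_sum]
      congr 1; funext b
      rw [pow_succ', Matrix.mul_apply]
      simp only [hB, Finset.sum_mul, Finset.mul_sum]
      rw [Finset.sum_comm]
      refine Finset.sum_congr rfl fun i _ => Finset.sum_congr rfl fun v _ => ?_
      have : (∏ j ∈ (if i ∈ S then S.erase i else insert i S), sg b j) =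
          sg b i * ∏ j ∈ S, sg b j := by
        split_ifs with h
        · rw [← Finset.mul_prod_erase S _ h, ← mul_assoc, sg_mul_self, one_mul]
        · rw [Finset.prod_insert h]
      rw [this]; ring
    rw [key]
    have hcard : ∀ i, (if i ∈ S then S.erase i else insert i S).card =
        if i ∈ S then S.card - 1 else S.card + 1 := by
      intro i; split_ifs with h
      · rw [Finset.card_erase_of_mem h]
      · rw [Finset.card_insert_of_notMem h]
    have step : ∀ i v, |(A i u v / (√(G u) * √(G v))) *
          Ex (fun b => (∏ j ∈ (if i ∈ S then S.erase i else insert i S), sg b j) * (B b ^ N) v w)|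
          ≤ |A i u v| * ((if i ∈ S then x ^ (S.card - 1) else x ^ (S.card + 1)) * (2 * x) ^ N *
            (1 / (√(G u) * √(G w)))) := by
      intro i v
      have hsv : 0 < √(G v) := Real.sqrt_pos.2 (hG v)
      have h := ih (if i ∈ S then S.erase i else insert i S) v w (by
        rw [hcard]; split_ifs <;> omega)
      rw [hcard] at h
      rw [abs_mul, abs_div, abs_of_pos (mul_pos hsu hsv)]
      calc _ ≤ |A i u v| / (√(G u) * √(G v)) * _ :=
            mul_le_mul_of_nonneg_left h (by positivity)
        _ = _ := by
            split_ifs <;> field_simp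
    have tot : ∀ i, ∑ v, |A i u v| * ((if i ∈ S then x ^ (S.card - 1) else x ^ (S.card + 1)) * (2 * x) ^ N *
            (1 / (√(G u) * √(G w)))) ≤ ((if i ∈ S then ε * G u * x ^ (S.card - 1) else 0) +
             (∑ v, |A i u v|) * x ^ (S.card + 1)) * ((2 * x) ^ N * (1 / (√(G u) * √(G w)))) := by
      intro i
      rw [← Finset.sum_mul]
      have e : ∀ a b c d : ℝ, a * (b * c * d) = (a * b) * (c * d) := by intros; ring
      rw [e]
      refine mul_le_mul_of_nonneg_right ?_ (by positivity)
      have hnn : 0 ≤ ∑ v, |A i u v| := Finset.sum_nonneg fun _ _ => abs_nonneg _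
      split_ifs
      · have := mul_le_mul_of_nonneg_right (h2 i u) (pow_pos hx (S.card - 1)).le
        have := mul_nonneg hnn (pow_pos hx (S.card + 1)).le
        linarith
      · simp
    calc _ ≤ ∑ i, ∑ v, |(A i u v / (√(G u) * √(G v))) *
          Ex (fun b => (∏ j ∈ (if i ∈ S then S.erase i else insert i S), sg b j) * (B b ^ N) v w)| :=
          (Finset.abs_sum_le_sum_abs _ _).trans
            (Finset.sum_le_sum fun i _ => Finset.abs_sum_le_sum_abs _ _)
      _ ≤ ∑ i, ((if i ∈ S then ε * G u * x ^ (S.card - 1) else 0) +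
             (∑ v, |A i u v|) * x ^ (S.card + 1)) * ((2 * x) ^ N * (1 / (√(G u) * √(G w)))) :=
          Finset.sum_le_sum fun i _ => (Finset.sum_le_sum fun v _ => step i v).trans (tot i)
      _ = (S.card * (ε * G u * x ^ (S.card - 1)) + (∑ i, ∑ v, |A i u v|) * x ^ (S.card + 1)) *
            ((2 * x) ^ N * (1 / (√(G u) * √(G w)))) := by
          rw [← Finset.sum_mul, Finset.sum_add_distrib, ← Finset.sum_mul]
          simp
      _ ≤ (2 * (G u * x ^ (S.card + 1))) * ((2 * x) ^ N * (1 / (√(G u) * √(G w)))) := by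
          refine mul_le_mul_of_nonneg_right ?_ (by positivity)
          have a1 := mul_le_mul_of_nonneg_right (h1 u) (pow_pos hx (S.card + 1)).le
          have a2 : S.card * (ε * G u * x ^ (S.card - 1)) ≤ G u * x ^ (S.card + 1) := by
            rcases Nat.eq_zero_or_pos S.card with h0 | h0
            · rw [h0]; have := hG u; simp; positivity
            · obtain ⟨c, hc⟩ : ∃ c, S.card = c + 1 := ⟨S.card - 1, by omega⟩
              rw [hc]
              have e1 : x ^ (c + 1 + 1) = x ^ c * (P * ε) := by rw [← hxx]; ring
              rw [e1]
              have : ((c + 1 : ℕ) : ℝ) ≤ P := by exact_mod_cast (by omega)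
              have hGu := hG u
              calc ((c + 1 : ℕ) : ℝ) * (ε * G u * x ^ (c + 1 - 1)) ≤ P * (ε * G u * x ^ (c + 1 - 1)) :=
                    mul_le_mul_of_nonneg_right this (by positivity)
                _ = _ := by simp; ring
          linarith
      _ = _ := by
          have : G u = √(G u) * √(G u) := (Real.mul_self_sqrt (hG u).le).symm
          rw [this]
          have h' : √(√(G u) * √(G u)) = √(G u) := by rw [← this]
          rw [h']
          field_simp
          ring

open Matrix in
lemma quad_pow {U : Type*} [Fintype U] [DecidableEq U] (w : U → ℝ) (M : ℕ) :
    ∀ (B : Matrix U U ℝ), Bᵀ = B →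
    (w ⬝ᵥ B *ᵥ w) ^ (2 ^ (M + 1)) ≤ (w ⬝ᵥ w) ^ (2 ^ (M + 1)) * (B ^ (2 ^ (M + 1))).trace := by
  induction M with
  | zero =>
    intro B hB
    simp only [zero_add, pow_one]
    have e1 : w ⬝ᵥ B *ᵥ w = ∑ p : U × U, (w p.1 * w p.2) * B p.1 p.2 := by
      rw [Fintype.sum_prod_type]
      simp only [dotProduct, mulVec, Finset.mul_sum]
      refine Finset.sum_congr rfl fun i _ => Finset.sum_congr rfl fun j _ => by ring
    have e2 : (w ⬝ᵥ w) ^ 2 = ∑ p : U × U, (w p.1 * w p.2) ^ 2 := by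
      rw [Fintype.sum_prod_type, sq]
      simp only [dotProduct, Finset.mul_sum, Finset.sum_mul]
      refine Finset.sum_congr rfl fun i _ => Finset.sum_congr rfl fun j _ => by ring
    have e3 : (B ^ 2).trace = ∑ p : U × U, (B p.1 p.2) ^ 2 := by
      rw [Fintype.sum_prod_type, sq]
      simp only [Matrix.trace, Matrix.diag, Matrix.mul_apply]
      refine Finset.sum_congr rfl fun i _ => Finset.sum_congr rfl fun j _ => ?_
      have : B j i = B i j := congrFun (congrFun hB i) j
      rw [this, sq]
    rw [e1, e2, e3]
    exact Finset.sum_mul_sq_le_sq_mul_sq _ _ _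
  | succ M ih =>
    intro B hB
    have hww : 0 ≤ w ⬝ᵥ w := by
      simp only [dotProduct]; exact Finset.sum_nonneg fun i _ => mul_self_nonneg _
    have cs : (w ⬝ᵥ B *ᵥ w) ^ 2 ≤ (w ⬝ᵥ w) * (w ⬝ᵥ (B ^ 2) *ᵥ w) := by
      have e : w ⬝ᵥ (B ^ 2) *ᵥ w = (B *ᵥ w) ⬝ᵥ (B *ᵥ w) := by
        rw [sq, ← mulVec_mulVec, dotProduct_mulVec, ← mulVec_transpose, hB]
      rw [e]
      have := Finset.sum_mul_sq_le_sq_mul_sq Finset.univ w (B *ᵥ w)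
      simpa only [dotProduct, ← sq] using this
    have h := ih (B ^ 2) (by rw [transpose_pow, hB])
    rw [← pow_mul, ← pow_succ'] at h
    calc (w ⬝ᵥ B *ᵥ w) ^ (2 ^ (M + 1 + 1)) = ((w ⬝ᵥ B *ᵥ w) ^ 2) ^ (2 ^ (M + 1)) := by
          rw [← pow_mul]; congr 1; ring
      _ ≤ ((w ⬝ᵥ w) * (w ⬝ᵥ (B ^ 2) *ᵥ w)) ^ (2 ^ (M + 1)) :=
          pow_le_pow_left₀ (sq_nonneg _) cs _
      _ ≤ (w ⬝ᵥ w) ^ (2 ^ (M + 1)) * ((w ⬝ᵥ w) ^ (2 ^ (M + 1)) * (B ^ (2 ^ (M + 1 + 1))).trace) := by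
          rw [mul_pow]
          exact mul_le_mul_of_nonneg_left h (by positivity)
      _ = _ := by rw [← mul_assoc, ← pow_add]; congr 2; ring

open Matrix in
/-- Spectral bound for a random signed sum of matrices, with degree normalisation. -/
lemma spectral {U : Type*} [Fintype U] [DecidableEq U] {k : ℕ}
    (A : Fin k → Matrix U U ℝ) (hA : ∀ i, (A i)ᵀ = A i)
    (G : U → ℝ) (hG : ∀ u, 0 < G u) (ε : ℝ) (hε : 0 < ε)
    (h1 : ∀ u, ∑ i, ∑ v, |A i u v| ≤ G u) (h2 : ∀ i u, ∑ v, |A i u v| ≤ ε * G u)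
    (M : ℕ) (hU : (Fintype.card U : ℝ) ≤ Real.exp (2 ^ (M + 1) : ℕ))
    (z : (Fin k → ℤˣ) → U → ℝ) (hz : ∀ b u, z b u * z b u = 1) :
    Ex (fun b => ∑ i, sg b i * (z b ⬝ᵥ A i *ᵥ z b)) ≤
      (∑ u, G u) * (Real.exp 1 * (2 * √((2 ^ (M + 1) : ℕ) * ε))) := by
  set P : ℕ := 2 ^ (M + 1) with hPdef
  have hP : 0 < P := by positivity
  set B : (Fin k → ℤˣ) → Matrix U U ℝ :=
    fun b => Matrix.of fun u v => ∑ i, sg b i * (A i u v / (√(G u) * √(G v))) with hBdef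
  have hB : ∀ b u v, B b u v = ∑ i, sg b i * (A i u v / (√(G u) * √(G v))) := fun _ _ _ => rfl
  have hBs : ∀ b, (B b)ᵀ = B b := by
    intro b; ext u v
    rw [transpose_apply, hB, hB]
    refine Finset.sum_congr rfl fun i _ => ?_
    have : A i v u = A i u v := congrFun (congrFun (hA i) u) v
    rw [this, mul_comm (√(G v))]
  set w : (Fin k → ℤˣ) → U → ℝ := fun b u => √(G u) * z b u with hw
  have hsG : ∀ u, 0 < √(G u) := fun u => Real.sqrt_pos.2 (hG u)
  have ew : ∀ b, w b ⬝ᵥ w b = ∑ u, G u := by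
    intro b
    simp only [dotProduct, hw]
    refine Finset.sum_congr rfl fun u _ => ?_
    calc _ = (√(G u) * √(G u)) * (z b u * z b u) := by ring
      _ = _ := by rw [hz, Real.mul_self_sqrt (hG u).le, mul_one]
  have eq1 : ∀ b, ∑ i, sg b i * (z b ⬝ᵥ A i *ᵥ z b) = w b ⬝ᵥ B b *ᵥ w b := by
    intro b
    simp only [dotProduct, mulVec, hB, Finset.mul_sum, Finset.sum_mul, hw]
    rw [Finset.sum_comm]
    refine Finset.sum_congr rfl fun u _ => ?_
    rw [Finset.sum_comm]
    refine Finset.sum_congr rfl fun v _ => Finset.sum_congr rfl fun i _ => ?_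
    have := hsG u; have := hsG v
    field_simp
  simp only [eq1]
  have hGs : 0 ≤ ∑ u, G u := Finset.sum_nonneg fun u _ => (hG u).le
  have main : (Ex (fun b => w b ⬝ᵥ B b *ᵥ w b)) ^ P ≤
      ((∑ u, G u) * (Real.exp 1 * (2 * √(P * ε)))) ^ P := by
    calc _ ≤ Ex (fun b => (w b ⬝ᵥ B b *ᵥ w b) ^ P) := Ex_pow_le _ _ (by omega)
      _ ≤ Ex (fun b => (∑ u, G u) ^ P * (B b ^ P).trace) := Ex_mono fun b => by
          rw [← ew b]; exact quad_pow (w b) M (B b) (hBs b)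
      _ = (∑ u, G u) ^ P * ∑ u, Ex (fun b => (B b ^ P) u u) := by
          rw [Ex_mul]; simp only [Matrix.trace, Matrix.diag]; rw [Ex_sum]
      _ ≤ (∑ u, G u) ^ P * ∑ u : U, (2 * √(P * ε)) ^ P := by
          refine mul_le_mul_of_nonneg_left (Finset.sum_le_sum fun u _ => ?_) (by positivity)
          have := trace_moment A G hG ε hε h1 h2 B hB P hP P ∅ u u (by simp)
          simp only [Finset.prod_empty, one_mul, Finset.card_empty, pow_zero,
            div_self (hsG u).ne', mul_one] at this
          exact (le_abs_self _).trans this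
      _ ≤ (∑ u, G u) ^ P * (Real.exp 1 ^ P * (2 * √(P * ε)) ^ P) := by
          rw [Finset.sum_const, Finset.card_univ, nsmul_eq_mul]
          refine mul_le_mul_of_nonneg_left ?_ (by positivity)
          refine mul_le_mul_of_nonneg_right ?_ (by positivity)
          rw [← Real.exp_nat_mul, mul_one]; exact hU
      _ = _ := by rw [← mul_pow, ← mul_pow]
  exact le_of_pow_le_pow_left₀ hP.ne' (by positivity) main


open Matrix in
/-- Graph version of the spectral bound. -/
lemma graph_bound {U Ω : Type*} [Fintype U] [DecidableEq U] [Fintype Ω] {k : ℕ}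
    (s t : Ω → U) (lab : Ω → Fin k) (a : Ω → ℝ)
    (G : U → ℝ) (hG : ∀ u, 0 < G u) (ε : ℝ) (hε : 0 < ε)
    (h1 : ∀ u, ∑ o, |a o| * ((if s o = u then 1 else 0) + (if t o = u then 1 else 0)) ≤ G u)
    (h2 : ∀ i u, ∑ o, (if lab o = i then |a o| *
      ((if s o = u then 1 else 0) + (if t o = u then 1 else 0)) else 0) ≤ ε * G u)
    (M : ℕ) (hU : (Fintype.card U : ℝ) ≤ Real.exp (2 ^ (M + 1) : ℕ))
    (z : (Fin k → ℤˣ) → U → ℝ) (hz : ∀ b u, z b u * z b u = 1) :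
    Ex (fun b => ∑ o, sg b (lab o) * (a o * (z b (s o) * z b (t o)))) ≤
      (∑ u, G u) * (Real.exp 1 * √((2 ^ (M + 1) : ℕ) * ε)) := by
  set A : Fin k → Matrix U U ℝ := fun i => Matrix.of fun u v =>
    ∑ o, if lab o = i then a o * ((if s o = u then 1 else 0) * (if t o = v then 1 else 0) +
      (if t o = u then 1 else 0) * (if s o = v then 1 else 0)) else 0 with hAdef
  have hAa : ∀ i u v, A i u v = ∑ o, if lab o = i then a o * ((if s o = u then 1 else 0) *
      (if t o = v then 1 else 0) +
      (if t o = u then 1 else 0) * (if s o = v then 1 else 0)) else 0 := fun _ _ _ => rfl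
  have hAs : ∀ i, (A i)ᵀ = A i := by
    intro i; ext u v
    rw [transpose_apply, hAa, hAa]
    refine Finset.sum_congr rfl fun o _ => ?_
    split_ifs <;> ring
  have row : ∀ i u, ∑ v, |A i u v| ≤ ∑ o, (if lab o = i then |a o| *
      ((if s o = u then 1 else 0) + (if t o = u then 1 else 0)) else 0) := by
    intro i u
    calc ∑ v, |A i u v| ≤ ∑ v, ∑ o, (if lab o = i then |a o| * ((if s o = u then 1 else 0) *
      (if t o = v then 1 else 0) +
      (if t o = u then 1 else 0) * (if s o = v then 1 else 0)) else 0) := by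
          refine Finset.sum_le_sum fun v _ => ?_
          rw [hAa]
          refine (Finset.abs_sum_le_sum_abs _ _).trans (Finset.sum_le_sum fun o _ => le_of_eq ?_)
          by_cases hl : lab o = i
          · simp only [hl, if_true, abs_mul]
            congr 1
            apply abs_of_nonneg
            split_ifs <;> norm_num
          · simp [hl]
      _ = _ := by
          rw [Finset.sum_comm]
          refine Finset.sum_congr rfl fun o _ => ?_
          by_cases hl : lab o = i
          · simp only [hl, if_true]
            rw [← Finset.mul_sum, Finset.sum_add_distrib, ← Finset.mul_sum, ← Finset.mul_sum]
            simp
          · simp [hl]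
  have quad : ∀ b, ∑ i, sg b i * (z b ⬝ᵥ A i *ᵥ z b) =
      2 * ∑ o, sg b (lab o) * (a o * (z b (s o) * z b (t o))) := by
    intro b
    have q1 : ∀ i, z b ⬝ᵥ A i *ᵥ z b =
        ∑ o, if lab o = i then 2 * (a o * (z b (s o) * z b (t o))) else 0 := by
      intro i
      simp only [dotProduct, mulVec, hAa, Finset.mul_sum, Finset.sum_mul]
      rw [Finset.sum_congr rfl fun u _ => Finset.sum_comm, Finset.sum_comm]
      refine Finset.sum_congr rfl fun o _ => ?_
      by_cases hl : lab o = i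
      · simp only [hl, if_true]
        have : ∀ u v, z b u * (a o * ((if s o = u then (1:ℝ) else 0) * (if t o = v then 1 else 0) +
            (if t o = u then 1 else 0) * (if s o = v then 1 else 0)) * z b v) =
            (if s o = u then (if t o = v then a o * (z b u * z b v) else 0) else 0) +
            (if t o = u then (if s o = v then a o * (z b u * z b v) else 0) else 0) := by
          intro u v; split_ifs <;> ring
        simp only [this, Finset.sum_add_distrib]
        simp
        ring
      · simp [hl]
    simp only [q1, Finset.mul_sum]
    rw [Finset.sum_comm]
    refine Finset.sum_congr rfl fun o _ => ?_
    simp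
    ring
  have := spectral A hAs G hG ε hε (fun u => by
      refine le_trans ?_ (h1 u)
      refine (Finset.sum_le_sum fun i _ => row i u).trans (le_of_eq ?_)
      rw [Finset.sum_comm]
      refine Finset.sum_congr rfl fun o _ => ?_
      simp) (fun i u => (row i u).trans (h2 i u)) M hU z hz
  simp only [quad] at this
  rw [Ex_mul] at this
  linarith

/-- smoothed version: only average label degrees along edges are needed. -/
lemma smooth_bound {E Y V : Type*} [Fintype E] [Fintype Y] [Fintype V] [DecidableEq V]
    [Nonempty Y] [Nonempty V] {k : ℕ}
    (S T : E → Y → V) (lab : E → Fin k) (δ : E → ℝ) (hδ : ∀ e, |δ e| ≤ 1) (κ : ℝ) (hκ : 0 < κ)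
    (hS : ∀ e₀, ∑ y₀, ∑ e, ∑ y, (if lab e = lab e₀ ∧ S e y = S e₀ y₀ then (1:ℝ) else 0) ≤
      Fintype.card Y * κ)
    (hT : ∀ e₀, ∑ y₀, ∑ e, ∑ y, (if lab e = lab e₀ ∧ T e y = T e₀ y₀ then (1:ℝ) else 0) ≤
      Fintype.card Y * κ)
    (M : ℕ) (hU : (2 * Fintype.card V : ℝ) ≤ Real.exp (2 ^ (M + 1) : ℕ))
    (z : (Fin k → ℤˣ) → V → ℝ) (hz : ∀ b u, z b u * z b u = 1)
    (g : (Fin k → ℤˣ) → E → ℝ) (hg : ∀ b e y, z b (S e y) * z b (T e y) = g b e) :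
    Ex (fun b => ∑ e, sg b (lab e) * (δ e * g b e)) ≤
      12 * Real.exp 1 * √((2 ^ (M + 1) : ℕ) * (Fintype.card E * κ *
        (Fintype.card V / Fintype.card Y))) := by
  rcases isEmpty_or_nonempty E with hE | hE
  · simp [Ex_const]
  have cY : (0:ℝ) < Fintype.card Y := by exact_mod_cast Fintype.card_pos
  have cV : (0:ℝ) < Fintype.card V := by exact_mod_cast Fintype.card_pos
  have cE : (0:ℝ) < Fintype.card E := by exact_mod_cast Fintype.card_pos
  set ΔS : Fin k → V → ℝ := fun i u => ∑ e, ∑ y, (if lab e = i ∧ S e y = u then (1:ℝ) else 0)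
    with hΔS
  set ΔT : Fin k → V → ℝ := fun i u => ∑ e, ∑ y, (if lab e = i ∧ T e y = u then (1:ℝ) else 0)
    with hΔT
  have ΔS0 : ∀ i u, 0 ≤ ΔS i u := fun i u => Finset.sum_nonneg fun e _ =>
    Finset.sum_nonneg fun y _ => by split_ifs <;> norm_num
  have ΔT0 : ∀ i u, 0 ≤ ΔT i u := fun i u => Finset.sum_nonneg fun e _ =>
    Finset.sum_nonneg fun y _ => by split_ifs <;> norm_num
  set ω : E → Y → ℝ := fun e y => κ / (κ + ΔS (lab e) (S e y) + ΔT (lab e) (T e y)) with hω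
  have hω0 : ∀ e y, 0 < ω e y := fun e y => by
    have := ΔS0 (lab e) (S e y); have := ΔT0 (lab e) (T e y)
    simp only [hω]; positivity
  have hω1 : ∀ e y, ω e y ≤ 1 := fun e y => by
    have := ΔS0 (lab e) (S e y); have := ΔT0 (lab e) (T e y)
    simp only [hω]; rw [div_le_one (by positivity)]; linarith
  have hωS : ∀ e y, ω e y ≤ κ / (κ + ΔS (lab e) (S e y)) := fun e y => by
    have := ΔS0 (lab e) (S e y); have := ΔT0 (lab e) (T e y)
    simp only [hω]
    exact div_le_div_of_nonneg_left hκ.le (by positivity) (by linarith)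
  have hωT : ∀ e y, ω e y ≤ κ / (κ + ΔT (lab e) (T e y)) := fun e y => by
    have := ΔS0 (lab e) (S e y); have := ΔT0 (lab e) (T e y)
    simp only [hω]
    exact div_le_div_of_nonneg_left hκ.le (by positivity) (by linarith)
  have hωl : ∀ e y, 5/9 - (ΔS (lab e) (S e y) + ΔT (lab e) (T e y)) / (9 * κ) ≤ ω e y := by
    intro e y
    have h1 := ΔS0 (lab e) (S e y); have h2 := ΔT0 (lab e) (T e y)
    simp only [hω]
    set p := ΔS (lab e) (S e y) + ΔT (lab e) (T e y) with hp
    have hp0 : 0 ≤ p := by positivity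
    rw [show κ + ΔS (lab e) (S e y) + ΔT (lab e) (T e y) = κ + p by rw [hp]; ring]
    rw [le_div_iff₀ (by positivity)]
    have : (5/9 - p / (9 * κ)) * (κ + p) = (5 * κ - p) * (κ + p) / (9 * κ) := by
      field_simp
    rw [this, div_le_iff₀ (by positivity)]
    nlinarith [sq_nonneg (p - 2 * κ)]
  set W : E → ℝ := fun e => ∑ y, ω e y with hW
  have hWl : ∀ e, Fintype.card Y / 3 ≤ W e := by
    intro e
    have h := Finset.sum_le_sum fun y (_ : y ∈ (Finset.univ : Finset Y)) => hωl e y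
    rw [Finset.sum_sub_distrib,
      ← Finset.sum_div _ (fun y => ΔS (lab e) (S e y) + ΔT (lab e) (T e y)),
      Finset.sum_add_distrib] at h
    have a1 : ∑ y, ΔS (lab e) (S e y) ≤ Fintype.card Y * κ := hS e
    have a2 : ∑ y, ΔT (lab e) (T e y) ≤ Fintype.card Y * κ := hT e
    have a3 : (∑ y, ΔS (lab e) (S e y) + ∑ y, ΔT (lab e) (T e y)) / (9 * κ) ≤
        (2/9) * Fintype.card Y := by
      rw [div_le_iff₀ (by positivity)]; nlinarith
    simp only [Finset.sum_const, Finset.card_univ, nsmul_eq_mul] at h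
    simp only [hW]
    linarith
  have hW0 : ∀ e, 0 < W e := fun e => lt_of_lt_of_le (by positivity) (hWl e)
  set a : E × Y → ℝ := fun o => δ o.1 * (ω o.1 o.2 / W o.1) with ha
  have haω : ∀ e y, |a (e, y)| ≤ 3 / Fintype.card Y * ω e y := by
    intro e y
    simp only [ha, abs_mul, abs_div, abs_of_pos (hω0 e y), abs_of_pos (hW0 e)]
    calc |δ e| * (ω e y / W e) ≤ 1 * (ω e y / (Fintype.card Y / 3)) := by
          have := hω0 e y
          have := hW0 e
          gcongr
          · exact hδ e
          · exact hWl e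
      _ = _ := by field_simp
  set d : ℝ := Fintype.card E * Fintype.card Y / Fintype.card V with hd
  have hd0 : 0 < d := by positivity
  set G : V ⊕ V → ℝ := fun u => 3 / Fintype.card Y *
    (d + Sum.elim (fun x => ∑ o : E × Y, if S o.1 o.2 = x then (1:ℝ) else 0)
      (fun x => ∑ o : E × Y, if T o.1 o.2 = x then (1:ℝ) else 0) u) with hGdef
  have hGd : ∀ u, 3 / Fintype.card Y * d ≤ G u := by
    intro u
    simp only [hGdef]
    gcongr
    have : 0 ≤ Sum.elim (fun x => ∑ o : E × Y, if S o.1 o.2 = x then (1:ℝ) else 0)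
      (fun x => ∑ o : E × Y, if T o.1 o.2 = x then (1:ℝ) else 0) u := by
      rcases u with x | x <;> simp only [Sum.elim_inl, Sum.elim_inr] <;>
      exact Finset.sum_nonneg fun o _ => by split_ifs <;> norm_num
    linarith
  have hG0 : ∀ u, 0 < G u := fun u => lt_of_lt_of_le (by positivity) (hGd u)
  have hGsum : ∑ u, G u = 12 * Fintype.card E := by
    simp only [hGdef, Fintype.sum_sum_type, Sum.elim_inl, Sum.elim_inr]
    rw [← Finset.mul_sum, ← Finset.mul_sum, Finset.sum_add_distrib, Finset.sum_add_distrib]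
    rw [Finset.sum_comm (f := fun (x : V) (o : E × Y) => if S o.1 o.2 = x then (1:ℝ) else 0),
      Finset.sum_comm (f := fun (x : V) (o : E × Y) => if T o.1 o.2 = x then (1:ℝ) else 0)]
    simp [hd]
    field_simp
    norm_num
  have lblS : ∀ i x, ∑ o : E × Y, (if lab o.1 = i then |a o| * (if S o.1 o.2 = x then 1 else 0) else 0)
      ≤ 3 / Fintype.card Y * κ := by
    intro i x
    have hx := ΔS0 i x
    calc _ ≤ ∑ o : E × Y, 3 / Fintype.card Y * (κ / (κ + ΔS i x)) *
          (if lab o.1 = i ∧ S o.1 o.2 = x then (1:ℝ) else 0) := by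
          refine Finset.sum_le_sum fun o _ => ?_
          by_cases h1 : lab o.1 = i
          · by_cases h2 : S o.1 o.2 = x
            · simp only [h1, h2, if_true, and_self, mul_one]
              refine (haω o.1 o.2).trans ?_
              have := hωS o.1 o.2
              rw [h1, h2] at this
              gcongr
            · simp [h1, h2]
          · simp [h1]
      _ = 3 / Fintype.card Y * (κ / (κ + ΔS i x)) * ΔS i x := by
          rw [← Finset.mul_sum, Fintype.sum_prod_type]
      _ = 3 / Fintype.card Y * (κ * (ΔS i x / (κ + ΔS i x))) := by ring
      _ ≤ 3 / Fintype.card Y * (κ * 1) := by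
          gcongr
          rw [div_le_one (by positivity)]; linarith
      _ = _ := by rw [mul_one]
  have lblT : ∀ i x, ∑ o : E × Y, (if lab o.1 = i then |a o| * (if T o.1 o.2 = x then 1 else 0) else 0)
      ≤ 3 / Fintype.card Y * κ := by
    intro i x
    have hx := ΔT0 i x
    calc _ ≤ ∑ o : E × Y, 3 / Fintype.card Y * (κ / (κ + ΔT i x)) *
          (if lab o.1 = i ∧ T o.1 o.2 = x then (1:ℝ) else 0) := by
          refine Finset.sum_le_sum fun o _ => ?_
          by_cases h1 : lab o.1 = i
          · by_cases h2 : T o.1 o.2 = x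
            · simp only [h1, h2, if_true, and_self, mul_one]
              refine (haω o.1 o.2).trans ?_
              have := hωT o.1 o.2
              rw [h1, h2] at this
              gcongr
            · simp [h1, h2]
          · simp [h1]
      _ = 3 / Fintype.card Y * (κ / (κ + ΔT i x)) * ΔT i x := by
          rw [← Finset.mul_sum, Fintype.sum_prod_type]
      _ = 3 / Fintype.card Y * (κ * (ΔT i x / (κ + ΔT i x))) := by ring
      _ ≤ 3 / Fintype.card Y * (κ * 1) := by
          gcongr
          rw [div_le_one (by positivity)]; linarith
      _ = _ := by rw [mul_one]
  have haA : ∀ o, |a o| ≤ 3 / Fintype.card Y := by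
    rintro ⟨e, y⟩
    refine (haω e y).trans ?_
    have := hω1 e y
    calc _ ≤ 3 / (Fintype.card Y : ℝ) * 1 := by gcongr
      _ = _ := mul_one _
  have main := graph_bound (U := V ⊕ V) (Ω := E × Y) (fun o => Sum.inl (S o.1 o.2))
    (fun o => Sum.inr (T o.1 o.2)) (fun o => lab o.1) a G hG0 (κ / d) (by positivity)
    (by
      rintro (x | x)
      · simp only [Sum.inl.injEq, reduceCtorEq, if_false, add_zero, hGdef, Sum.elim_inl]
        rw [mul_add, Finset.mul_sum]
        have : ∑ o : E × Y, |a o| * (if S o.1 o.2 = x then (1:ℝ) else 0) ≤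
            ∑ o : E × Y, 3 / Fintype.card Y * (if S o.1 o.2 = x then (1:ℝ) else 0) :=
          Finset.sum_le_sum fun o _ => mul_le_mul_of_nonneg_right (haA o) (by split_ifs <;> norm_num)
        have : 0 ≤ 3 / Fintype.card Y * d := by positivity
        linarith
      · simp only [Sum.inr.injEq, reduceCtorEq, if_false, zero_add, hGdef, Sum.elim_inr]
        rw [mul_add, Finset.mul_sum]
        have : ∑ o : E × Y, |a o| * (if T o.1 o.2 = x then (1:ℝ) else 0) ≤
            ∑ o : E × Y, 3 / Fintype.card Y * (if T o.1 o.2 = x then (1:ℝ) else 0) :=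
          Finset.sum_le_sum fun o _ => mul_le_mul_of_nonneg_right (haA o) (by split_ifs <;> norm_num)
        have : 0 ≤ 3 / Fintype.card Y * d := by positivity
        linarith)
    (by
      intro i u
      have hk : 3 / Fintype.card Y * κ ≤ κ / d * G u := by
        calc 3 / Fintype.card Y * κ = κ / d * (3 / Fintype.card Y * d) := by field_simp
          _ ≤ _ := by have := hGd u; gcongr
      refine le_trans ?_ hk
      rcases u with x | x
      · simpa only [Sum.inl.injEq, reduceCtorEq, if_false, add_zero] using lblS i x
      · simpa only [Sum.inr.injEq, reduceCtorEq, if_false, zero_add] using lblT i x)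
    M (by rw [Fintype.card_sum]; push_cast; push_cast at hU; linarith)
    (fun b => Sum.elim (z b) (z b)) (by rintro b (x | x) <;> exact hz b x)
  have lhs : ∀ b, ∑ o : E × Y, sg b (lab o.1) * (a o * (z b (S o.1 o.2) * z b (T o.1 o.2))) =
      ∑ e, sg b (lab e) * (δ e * g b e) := by
    intro b
    rw [Fintype.sum_prod_type]
    refine Finset.sum_congr rfl fun e _ => ?_
    simp only [hg, ha]
    have : ∀ y, sg b (lab e) * (δ e * (ω e y / W e) * g b e) =
       (sg b (lab e) * (δ e * g b e)) / W e * ω e y := by intro y; ring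
    simp only [this]
    rw [← Finset.mul_sum]
    have := hW0 e
    exact div_mul_cancel₀ _ this.ne'
  simp only [Sum.elim_inl, Sum.elim_inr, lhs] at main
  refine main.trans (le_of_eq ?_)
  rw [hGsum]
  have e1 : ((2 ^ (M + 1) : ℕ) : ℝ) * (Fintype.card E * κ * (Fintype.card V / Fintype.card Y)) =
      (Fintype.card E) ^ 2 * (((2 ^ (M + 1) : ℕ) : ℝ) * (κ / d)) := by
    simp only [hd]; field_simp
  rw [e1, Real.sqrt_mul (sq_nonneg (Fintype.card E : ℝ)), Real.sqrt_sq cE.le]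
  ring

/-- number of positions with a given value -/
def cnt {m n : ℕ} (s : Fin m → Fin n) (x : Fin n) : ℝ := ∑ p, if s p = x then (1:ℝ) else 0

lemma upd_fiber {m n : ℕ} (s : Fin m → Fin n) (x : Fin n) :
    ∑ y : Fin m × (Fin m → Fin n), (if Function.update y.2 y.1 x = s then (1:ℝ) else 0) =
      n * cnt s x := by
  rw [Fintype.sum_prod_type]
  unfold cnt
  rw [Finset.mul_sum]
  refine Finset.sum_congr rfl fun p _ => ?_
  simp only
  split_ifs with h
  · rw [mul_one, Finset.sum_boole]
    have : (Finset.univ.filter fun ξ : Fin m → Fin n => Function.update ξ p x = s) =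
        Finset.univ.image (fun c : Fin n => Function.update s p c) := by
      ext ξ
      simp only [Finset.mem_filter, Finset.mem_univ, true_and, Finset.mem_image]
      constructor
      · intro hξ
        refine ⟨ξ p, ?_⟩
        rw [← hξ]; simp
      · rintro ⟨c, rfl⟩
        rw [Function.update_idem, ← h, Function.update_eq_self]
    rw [this, Finset.card_image_of_injective _ (Function.update_injective s p)]
    simp
  · rw [mul_zero]
    refine Finset.sum_eq_zero fun ξ _ => ?_
    rw [if_neg]
    intro hξ
    apply h
    rw [← hξ]; simp

lemma cnt_nonneg {m n : ℕ} (s : Fin m → Fin n) (x : Fin n) : 0 ≤ cnt s x :=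
  Finset.sum_nonneg fun _ _ => by split_ifs <;> norm_num

lemma cnt_sum {m n : ℕ} (x : Fin n) :
    n * ∑ s : Fin m → Fin n, cnt s x = m * (n:ℝ) ^ m := by
  rw [Finset.mul_sum]
  simp only [← upd_fiber]
  rw [Finset.sum_comm]
  simp

lemma cnt_upd {m n : ℕ} (s : Fin m → Fin n) (p : Fin m) (x₀ x : Fin n) :
    cnt (Function.update s p x₀) x ≤ (if x = x₀ then 1 else 0) + cnt s x := by
  unfold cnt
  calc _ ≤ ∑ p', ((if p' = p then (if x = x₀ then (1:ℝ) else 0) else 0) +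
        (if s p' = x then (1:ℝ) else 0)) := by
        refine Finset.sum_le_sum fun p' _ => ?_
        by_cases hp : p' = p
        · subst hp
          simp only [Function.update_self, if_true]
          have : (0:ℝ) ≤ if s p' = x then (1:ℝ) else 0 := by split_ifs <;> norm_num
          by_cases hx : x₀ = x
          · subst hx; simp; linarith
          · rw [if_neg hx, if_neg (Ne.symm hx)]; linarith
        · simp [hp, Function.update_of_ne]
    _ = _ := by rw [Finset.sum_add_distrib]; simp

lemma cnt_avg {m n : ℕ} (hn : 0 < n) (x₀ x : Fin n) :
    ∑ y : Fin m × (Fin m → Fin n), cnt (Function.update y.2 y.1 x₀) x ≤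
      (m * (n:ℝ) ^ m) * ((if x = x₀ then 1 else 0) + (m:ℝ) / n) := by
  have hn' : (0:ℝ) < n := by exact_mod_cast hn
  have hs : ∑ s : Fin m → Fin n, cnt s x = m * (n:ℝ) ^ m / n := by
    rw [eq_div_iff hn'.ne', mul_comm, cnt_sum]
  calc _ ≤ ∑ y : Fin m × (Fin m → Fin n), ((if x = x₀ then (1:ℝ) else 0) + cnt y.2 x) :=
        Finset.sum_le_sum fun y _ => cnt_upd _ _ _ _
    _ = _ := by
        rw [Finset.sum_add_distrib, Fintype.sum_prod_type, Fintype.sum_prod_type]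
        simp [hs]
        field_simp
        split_ifs <;> ring

lemma sum_prod_pi {r : ℕ} {β : Type*} [Fintype β] (f : Fin r → β → ℝ) :
    ∑ Y : Fin r → β, ∏ j, f j (Y j) = ∏ j, ∑ y, f j y := by
  rw [Finset.prod_univ_sum, Fintype.piFinset_univ]

lemma kik_count {E : Type*} [Fintype E] {k m n r : ℕ} (hn : 0 < n) (lab : E → Fin k)
    (v : E → Fin r → Fin n) (κ : ℝ) (e₀ : E)
    (h : ∑ e, (if lab e = lab e₀ then ∏ j, ((if v e j = v e₀ j then (1:ℝ) else 0) + (m:ℝ) / n) else 0)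
      ≤ κ) :
    ∑ y₀ : Fin r → Fin m × (Fin m → Fin n), ∑ e, ∑ y : Fin r → Fin m × (Fin m → Fin n),
      (if lab e = lab e₀ ∧ (fun j => Function.update (y j).2 (y j).1 (v e j)) =
        (fun j => Function.update (y₀ j).2 (y₀ j).1 (v e₀ j)) then (1:ℝ) else 0) ≤
      Fintype.card (Fin r → Fin m × (Fin m → Fin n)) * ((n:ℝ) ^ r * κ) := by
  rw [Finset.sum_comm]
  have fib : ∀ e (y₀ : Fin r → Fin m × (Fin m → Fin n)),
      ∑ y : Fin r → Fin m × (Fin m → Fin n),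
      (if lab e = lab e₀ ∧ (fun j => Function.update (y j).2 (y j).1 (v e j)) =
        (fun j => Function.update (y₀ j).2 (y₀ j).1 (v e₀ j)) then (1:ℝ) else 0) =
      if lab e = lab e₀ then
        (n:ℝ)^r * ∏ j, cnt (Function.update (y₀ j).2 (y₀ j).1 (v e₀ j)) (v e j) else 0 := by
    intro e y₀
    by_cases hl : lab e = lab e₀
    · simp only [hl, true_and, if_true]
      have : ∀ y : Fin r → Fin m × (Fin m → Fin n),
          (if (fun j => Function.update (y j).2 (y j).1 (v e j)) =
        (fun j => Function.update (y₀ j).2 (y₀ j).1 (v e₀ j)) then (1:ℝ) else 0) =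
        ∏ j, (if Function.update (y j).2 (y j).1 (v e j) =
          Function.update (y₀ j).2 (y₀ j).1 (v e₀ j) then (1:ℝ) else 0) := by
        intro y
        rw [Finset.prod_ite_zero]
        simp [funext_iff]
      simp only [this]
      rw [sum_prod_pi (fun j (w : Fin m × (Fin m → Fin n)) =>
        if Function.update w.2 w.1 (v e j) =
          Function.update (y₀ j).2 (y₀ j).1 (v e₀ j) then (1:ℝ) else 0)]
      simp only [upd_fiber]
      rw [Finset.prod_mul_distrib]; simp
    · simp [hl]
  simp only [fib]
  have hcard : (Fintype.card (Fin r → Fin m × (Fin m → Fin n)) : ℝ) = (m * (n:ℝ)^m)^r := by simp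
  rw [hcard]
  calc _ ≤ ∑ e, (m * (n:ℝ)^m)^r * ((n:ℝ)^r * (if lab e = lab e₀ then
        ∏ j, ((if v e j = v e₀ j then (1:ℝ) else 0) + (m:ℝ) / n) else 0)) := by
        refine Finset.sum_le_sum fun e _ => ?_
        by_cases hl : lab e = lab e₀
        · simp only [hl, if_true]
          rw [← Finset.mul_sum, sum_prod_pi (fun j (w : Fin m × (Fin m → Fin n)) =>
            cnt (Function.update w.2 w.1 (v e₀ j)) (v e j))]
          rw [mul_left_comm]
          refine mul_le_mul_of_nonneg_left ?_ (by positivity)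
          calc _ ≤ ∏ j : Fin r, (m * (n:ℝ) ^ m) * ((if v e j = v e₀ j then (1:ℝ) else 0) + (m:ℝ) / n) :=
                Finset.prod_le_prod (fun j _ => Finset.sum_nonneg fun _ _ => cnt_nonneg _ _)
                  (fun j _ => cnt_avg hn _ _)
            _ = _ := by rw [Finset.prod_mul_distrib]; simp
        · simp [hl]
    _ = (m * (n:ℝ)^m)^r * ((n:ℝ)^r * ∑ e, (if lab e = lab e₀ then
        ∏ j, ((if v e j = v e₀ j then (1:ℝ) else 0) + (m:ℝ) / n) else 0)) := by
        rw [← Finset.mul_sum, ← Finset.mul_sum]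
    _ ≤ _ := by gcongr

lemma upd_prod {m n : ℕ} (x : Fin n → ℝ) (hx : ∀ u, x u * x u = 1) (p : Fin m) (ξ : Fin m → Fin n)
    (v w : Fin n) :
    (∏ i, x (Function.update ξ p v i)) * (∏ i, x (Function.update ξ p w i)) = x v * x w := by
  rw [← Finset.prod_mul_distrib]
  rw [← Finset.mul_prod_erase Finset.univ _ (Finset.mem_univ p)]
  rw [Finset.prod_eq_one]
  · simp
  · intro i hi
    have : i ≠ p := (Finset.mem_erase.1 hi).1
    simp [Function.update_of_ne this, hx]

/-- The Kikuchi bound. -/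
lemma kikuchi_bound {E : Type*} [Fintype E] {k m n r : ℕ} (hn : 0 < n) (hm : 0 < m)
    (lab : E → Fin k) (v w : E → Fin r → Fin n) (δ : E → ℝ) (hδ : ∀ e, |δ e| ≤ 1)
    (κ : ℝ) (hκ : 0 < κ)
    (hv : ∀ e₀, ∑ e, (if lab e = lab e₀ then
      ∏ j, ((if v e j = v e₀ j then (1:ℝ) else 0) + (m:ℝ) / n) else 0) ≤ κ)
    (hw : ∀ e₀, ∑ e, (if lab e = lab e₀ then
      ∏ j, ((if w e j = w e₀ j then (1:ℝ) else 0) + (m:ℝ) / n) else 0) ≤ κ)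
    (M : ℕ) (hU : 2 * (n:ℝ) ^ (m * r) ≤ Real.exp (2 ^ (M + 1) : ℕ))
    (x : (Fin k → ℤˣ) → Fin n → ℝ) (hx : ∀ b u, x b u * x b u = 1) :
    Ex (fun b => ∑ e, sg b (lab e) * (δ e * ∏ j, (x b (v e j) * x b (w e j)))) ≤
      12 * Real.exp 1 * √((2 ^ (M + 1) : ℕ) * (Fintype.card E * κ * ((n:ℝ) / m) ^ r)) := by
  have : Nonempty (Fin n) := ⟨⟨0, hn⟩⟩
  have : Nonempty (Fin m) := ⟨⟨0, hm⟩⟩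
  have hn' : (0:ℝ) < n := by exact_mod_cast hn
  have hm' : (0:ℝ) < m := by exact_mod_cast hm
  have main := smooth_bound (E := E) (Y := Fin r → Fin m × (Fin m → Fin n))
    (V := Fin r → Fin m → Fin n)
    (fun e y j => Function.update (y j).2 (y j).1 (v e j))
    (fun e y j => Function.update (y j).2 (y j).1 (w e j)) lab δ hδ ((n:ℝ)^r * κ) (by positivity)
    (fun e₀ => kik_count hn lab v κ e₀ (hv e₀)) (fun e₀ => kik_count hn lab w κ e₀ (hw e₀))
    M (by simpa [← pow_mul] using hU)
    (fun b s => ∏ j, ∏ i, x b (s j i))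
    (fun b s => by
      rw [← Finset.prod_mul_distrib]
      refine Finset.prod_eq_one fun j _ => ?_
      rw [← Finset.prod_mul_distrib]
      exact Finset.prod_eq_one fun i _ => hx b _)
    (fun b e => ∏ j, (x b (v e j) * x b (w e j)))
    (fun b e y => by
      rw [← Finset.prod_mul_distrib]
      refine Finset.prod_congr rfl fun j _ => ?_
      exact upd_prod (x b) (hx b) _ _ _ _)
  refine main.trans (le_of_eq ?_)
  congr 3
  simp
  rw [div_pow, mul_pow]
  field_simp


lemma Ex_shift {k : ℕ} (f : (Fin k → ℤˣ) → ℝ) (c : Fin k → ℤˣ) :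
    Ex (fun b => f (b * c)) = Ex f := by
  unfold Ex
  congr 1
  exact Fintype.sum_equiv (Equiv.mulRight c) _ _ (fun b => rfl)

lemma Ex_add {k : ℕ} (f g : (Fin k → ℤˣ) → ℝ) :
    Ex (fun b => f b + g b) = Ex f + Ex g := by
  unfold Ex
  rw [Finset.sum_add_distrib]; ring

lemma Ex_tau {k : ℕ} (i j : Fin k) (hij : i ≠ j) :
    Ex (fun τ => (1 + sg τ i) * (1 - sg τ j)) = 1 := by
  have h1 : Ex (fun τ => sg τ i) = 0 := by
    simpa using Ex_char {i} (by simp)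
  have h2 : Ex (fun τ => sg τ j) = 0 := by
    simpa using Ex_char {j} (by simp)
  have h3 : Ex (fun τ => sg τ i * sg τ j) = 0 := by
    have := Ex_char {i, j} (by simp)
    simpa [Finset.prod_pair hij] using this
  have : (fun τ : Fin k → ℤˣ => (1 + sg τ i) * (1 - sg τ j)) =
      fun τ => (1 + sg τ i) + ((-1) * sg τ j + (-1) * (sg τ i * sg τ j)) := by
    funext τ; ring
  rw [this, Ex_add, Ex_add, Ex_add, Ex_mul, Ex_mul, h1, h2, h3, Ex_const]
  ring

lemma decouple {Z X : Type*} [Fintype Z] {k : ℕ} (l1 l2 : Z → Fin k)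
    (hl : ∀ z, l1 z ≠ l2 z) (G : X → Z → ℝ) (B : ℝ)
    (hB : ∀ δ : Z → ℝ, (∀ z, |δ z| ≤ 1) → ∀ y : (Fin k → ℤˣ) → X,
      Ex (fun s => ∑ z, sg s (l1 z) * (δ z * G (y s) z)) ≤ B)
    (y : (Fin k → ℤˣ) → X) :
    Ex (fun b => ∑ z, sg b (l1 z) * sg b (l2 z) * G (y b) z) ≤ 4 * B := by
  have h1 : Ex (fun b => ∑ z, sg b (l1 z) * sg b (l2 z) * G (y b) z) =
      Ex (fun τ => Ex (fun b => ∑ z, ((1 + sg τ (l1 z)) * (1 - sg τ (l2 z))) *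
        (sg b (l1 z) * sg b (l2 z) * G (y b) z))) := by
    rw [Ex_comm]
    congr 1
    funext b
    rw [Ex_sum]
    refine Finset.sum_congr rfl fun z _ => ?_
    have : (fun τ : Fin k → ℤˣ => ((1 + sg τ (l1 z)) * (1 - sg τ (l2 z))) *
        (sg b (l1 z) * sg b (l2 z) * G (y b) z)) =
        fun τ => (sg b (l1 z) * sg b (l2 z) * G (y b) z) *
          ((1 + sg τ (l1 z)) * (1 - sg τ (l2 z))) := by
      funext τ; ring
    rw [this, Ex_mul, Ex_tau _ _ (hl z), mul_one]
  rw [h1, ← Ex_const (k := k) (4 * B)]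
  refine Ex_mono fun τ => ?_
  set f : (Fin k → ℤˣ) → ℝ := fun b => ∑ z, ((1 + sg τ (l1 z)) * (1 - sg τ (l2 z))) *
        (sg b (l1 z) * sg b (l2 z) * G (y b) z) with hf
  let L : (Fin k → ℤˣ) → (Fin k → ℤˣ) := fun s i => if τ i = 1 then s i else 1
  have h2 : Ex f = Ex (fun b => Ex (fun s => f (b * L s))) := by
    rw [Ex_comm]
    have : (fun s : Fin k → ℤˣ => Ex (fun b => f (b * L s))) = fun _ => Ex f := by
      funext s; exact Ex_shift f (L s)
    rw [this, Ex_const]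
  rw [h2, ← Ex_const (k := k) (4 * B)]
  refine Ex_mono fun b => ?_
  have h3 := hB (fun z => sg b (l1 z) * sg b (l2 z) * ((1 + sg τ (l1 z)) * (1 - sg τ (l2 z)) / 4))
    (by
      intro z
      rw [abs_mul, abs_mul, sg_abs, sg_abs]
      unfold sg
      rcases Int.units_eq_one_or (τ (l1 z)) with h | h <;>
      rcases Int.units_eq_one_or (τ (l2 z)) with h' | h' <;> simp [h, h'] <;> norm_num)
    (fun s => y (b * L s))
  refine le_trans (le_of_eq ?_) (mul_le_mul_of_nonneg_left h3 (by norm_num : (0:ℝ) ≤ 4))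
  rw [← Ex_mul]
  congr 1
  funext s
  rw [hf, Finset.mul_sum]
  refine Finset.sum_congr rfl fun z _ => ?_
  have hs : ∀ i, sg (b * L s) i = sg b i * sg (L s) i := by
    intro i; simp [sg]
  rw [hs, hs]
  rcases Int.units_eq_one_or (τ (l1 z)) with h | h
  · rcases Int.units_eq_one_or (τ (l2 z)) with h' | h'
    · have : sg τ (l2 z) = 1 := by simp [sg, h']
      rw [this]; ring
    · have e1 : sg (L s) (l1 z) = sg s (l1 z) := by simp [sg, L, h]
      have e2 : sg (L s) (l2 z) = 1 := by simp [sg, L, h']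
      rw [e1, e2]; ring
  · have : sg τ (l1 z) = -1 := by simp [sg, h]
    rw [this]; ring

lemma rho_pow {n q a r : ℕ} (hn : 2 ≤ n) {ρ : ℝ} (h0 : 0 ≤ ρ)
    (hρ : ρ ≤ 2 * (n:ℝ) ^ (-(2 / (q:ℝ)))) (ha : a ≤ r) :
    ρ ^ a ≤ 2 ^ r * (n:ℝ) ^ (-(2 * (a:ℝ) / q)) := by
  have hn0 : (0:ℝ) < n := by positivity
  calc ρ ^ a ≤ (2 * (n:ℝ) ^ (-(2 / (q:ℝ)))) ^ a := pow_le_pow_left₀ h0 hρ a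
    _ = 2 ^ a * (n:ℝ) ^ (-(2 * (a:ℝ) / q)) := by
        rw [mul_pow, ← Real.rpow_natCast ((n:ℝ) ^ (-(2 / (q:ℝ)))), ← Real.rpow_mul hn0.le]
        congr 2; ring
    _ ≤ _ := by
        gcongr
        norm_num

/-- number of agreeing pairs, weighted bound -/
lemma kappa_bound {E Θ : Type*} [Fintype E] [DecidableEq E] [DecidableEq Θ] {k n q t r : ℕ}
    (hn : 2 ≤ n) (hq : 3 ≤ q) (hqo : Odd q) (ht : 1 ≤ t) (hr : r + t = q)
    (lab : E → Fin k) (th : E → Θ) (A : E → Finset (Fin n)) (Q : Θ → Finset (Fin n))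
    (c : E → Fin r → Fin n) (D : ℕ → ℕ) (hDanti : ∀ s, D (s+1) ≤ D s) (hDt : 0 < D t)
    (hQ : ∀ e, Q (th e) ⊆ A e) (hQc : ∀ e, (Q (th e)).card = t)
    (hcinj : ∀ e, Function.Injective (c e)) (hcA : ∀ e j, c e j ∈ A e)
    (hcQ : ∀ e j, c e j ∉ Q (th e))
    (hmatch : ∀ e e' u, lab e = lab e' → u ∈ A e → u ∈ A e' → e = e')
    (hcod : ∀ U : Finset (Fin n), (univ.filter (fun e => U ⊆ A e)).card ≤ D U.card)
    (hfib : ∀ e, (univ.filter (fun e' => th e' = th e)).card ≤ D t)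
    (hlab : ∀ i, (univ.filter (fun e => lab e = i)).card ≤ n)
    (hg1 : ∀ s : ℕ, 1 ≤ s → s ≤ (q - t + 1) / 2 →
      (D s : ℝ) / D t ≤ (n : ℝ) ^ ((1 : ℝ) - 2 * (s : ℝ) / (q : ℝ)))
    (hg2 : ∀ s : ℕ, t ≤ s → s ≤ (q + t) / 2 →
      (D s : ℝ) / D t ≤ (n : ℝ) ^ (-(2 / (q : ℝ)) * ((s : ℝ) - (t : ℝ)) +
        (1 / (q : ℝ)) * ((t : ℝ) - if Even t then 1 else 0)))
    {ρ : ℝ} (h0 : 0 ≤ ρ) (h1 : ρ ≤ 1) (hρ : ρ ≤ 2 * (n:ℝ) ^ (-(2 / (q:ℝ))))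
    (S : Finset (Fin r)) (hS1 : r ≤ 2 * Sᶜ.card + 1) (hS2 : 2 * Sᶜ.card ≤ r + 1)
    (z₀ : {z : E × E // th z.1 = th z.2 ∧ z.1 ≠ z.2}) :
    ∑ z : {z : E × E // th z.1 = th z.2 ∧ z.1 ≠ z.2},
      (if lab z.1.1 = lab z₀.1.1 then ∏ j, ((if (if j ∈ S then c z.1.1 j else c z.1.2 j) =
        (if j ∈ S then c z₀.1.1 j else c z₀.1.2 j) then (1:ℝ) else 0) + ρ) else 0)
      ≤ 4 ^ r * (D t * (n:ℝ) ^ (-1 + 2 * (t:ℝ) / q)) := by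
  classical
  have hn0 : (0:ℝ) < n := by positivity
  have hn1 : (1:ℝ) ≤ n := by exact_mod_cast (by omega : 1 ≤ n)
  have hq0 : (0:ℝ) < q := by positivity
  have hDt0 : (0:ℝ) < D t := by exact_mod_cast hDt
  set v : {z : E × E // th z.1 = th z.2 ∧ z.1 ≠ z.2} → Fin r → Fin n :=
    fun z j => if j ∈ S then c z.1.1 j else c z.1.2 j with hv
  let N : Finset (Fin r) → Finset {z : E × E // th z.1 = th z.2 ∧ z.1 ≠ z.2} := fun J =>
    univ.filter (fun z => lab z.1.1 = lab z₀.1.1 ∧ ∀ j ∈ J, v z j = v z₀ j)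
  -- same label and same class forces equality
  have huniq : ∀ e e', lab e = lab e' → th e = th e' → e = e' := by
    intro e e' hl hth
    have : (Q (th e)).Nonempty := by
      rw [← Finset.card_pos, hQc]; omega
    obtain ⟨u, hu⟩ := this
    exact hmatch e e' u hl (hQ e hu) (hQ e' (hth ▸ hu))
  have hrq : (r:ℝ) + t = q := by exact_mod_cast hr
  have key : ∀ J : Finset (Fin r), ρ ^ (univ \ J).card * ((N J).card : ℝ) ≤
      2 ^ r * (D t * (n:ℝ) ^ (-1 + 2 * (t:ℝ) / q)) := by
    intro J
    have hJc : (univ \ J).card + J.card = r := by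
      have := Finset.card_sdiff_add_card_eq_card (Finset.subset_univ J)
      simpa using this
    by_cases hJ1 : (J ∩ S).Nonempty
    · -- C forced
      obtain ⟨j₁, hj₁⟩ := hJ1
      have hj1J := (Finset.mem_inter.1 hj₁).1
      have hj1S := (Finset.mem_inter.1 hj₁).2
      set U := (J \ S).image (c z₀.1.2) with hU
      have hUc : U.card = (J \ S).card := Finset.card_image_of_injective _ (hcinj _)
      have hdis : Disjoint (Q (th z₀.1.1)) U := by
        rw [Finset.disjoint_left]
        intro u hu hu'
        rw [hU, Finset.mem_image] at hu'
        obtain ⟨j, _, rfl⟩ := hu'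
        rw [z₀.2.1] at hu
        exact hcQ _ _ hu
      have hcard : (Q (th z₀.1.1) ∪ U).card = t + (J \ S).card := by
        rw [Finset.card_union_of_disjoint hdis, hQc, hUc]
      have hN : (N J).card ≤ D (t + (J \ S).card) := by
        rw [← hcard]
        refine le_trans ?_ (hcod _)
        have hfst : ∀ z ∈ N J, z.1.1 = z₀.1.1 := by
          intro z hz
          rw [Finset.mem_filter] at hz
          have := hz.2.2 j₁ hj1J
          simp only [hv, hj1S, if_true] at this
          exact hmatch _ _ (c z.1.1 j₁) hz.2.1 (hcA _ _) (this ▸ hcA _ _)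
        refine Finset.card_le_card_of_injOn (fun z => z.1.2) ?_ ?_
        · intro z hz
          have hf := hfst z hz
          have hz' := (Finset.mem_filter.1 hz).2
          simp only [Finset.coe_filter, Finset.mem_univ, true_and, Set.mem_ofPred_eq]
          apply Finset.union_subset
          · rw [← hf, z.2.1]; exact hQ _
          · intro u hu
            rw [hU, Finset.mem_image] at hu
            obtain ⟨j, hj, rfl⟩ := hu
            rw [Finset.mem_sdiff] at hj
            have := hz'.2 j hj.1
            simp only [hv, hj.2, if_false] at this
            rw [← this]; exact hcA _ _
        · intro z hz z' hz' he
          have h1 := hfst z hz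
          have h2 := hfst z' hz'
          exact Subtype.ext (Prod.ext (h1.trans h2.symm) he)
      set s := (J \ S).card with hs
      have hsβ : s ≤ Sᶜ.card := Finset.card_le_card (by
        intro j hj; simp only [Finset.mem_sdiff] at hj; simp [hj.2])
      have hβr : Sᶜ.card ≤ r := by simpa using Finset.card_le_univ Sᶜ
      have hexp : Sᶜ.card - s ≤ (univ \ J).card := by
        have : Sᶜ ⊆ (univ \ J) ∪ (J \ S) := by
          intro j hj
          simp only [Finset.mem_compl] at hj
          by_cases h : j ∈ J <;> simp [h, hj]
        have h2 := (Finset.card_le_card this).trans (Finset.card_union_le _ _)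
        omega
      have hpow : ρ ^ (univ \ J).card ≤ 2 ^ r * (n:ℝ) ^ (-(2 * ((Sᶜ.card - s : ℕ):ℝ) / q)) :=
        le_trans (pow_le_pow_of_le_one h0 h1 hexp) (rho_pow hn h0 hρ (by omega))
      have hND : ((N J).card : ℝ) ≤ D (t + s) := by exact_mod_cast hN
      have hmain : (n:ℝ) ^ (-(2 * ((Sᶜ.card - s : ℕ):ℝ) / q)) * D (t+s) ≤
          D t * (n:ℝ) ^ (-1 + 2 * (t:ℝ) / q) := by
        rw [Nat.cast_sub hsβ]
        set β := Sᶜ.card with hβ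
        have hrβ : (r:ℝ) ≤ 2 * β + 1 := by exact_mod_cast hS1
        by_cases hcase : 2 * s ≤ r
        · have hg := hg2 (t + s) (by omega) (by omega)
          rw [div_le_iff₀ hDt0] at hg
          calc _ ≤ (n:ℝ) ^ (-(2 * ((β:ℝ) - s) / q)) * ((n : ℝ) ^ (-(2 / (q : ℝ)) * (((t + s : ℕ) : ℝ) - (t : ℝ)) +
                (1 / (q : ℝ)) * ((t : ℝ) - if Even t then 1 else 0)) * D t) := by gcongr
            _ = D t * (n:ℝ) ^ (-(2 * ((β:ℝ) - s) / q) + (-(2 / (q : ℝ)) * (((t + s : ℕ) : ℝ) - (t : ℝ)) +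
                (1 / (q : ℝ)) * ((t : ℝ) - if Even t then 1 else 0))) := by
                rw [← mul_assoc, ← Real.rpow_add hn0, mul_comm]
            _ ≤ _ := by
                refine mul_le_mul_of_nonneg_left (Real.rpow_le_rpow_of_exponent_le hn1 ?_) hDt0.le
                have e1 : (-1 : ℝ) + 2 * t / q = (t - r) / q := by
                  rw [← hrq]; field_simp; ring
                have e2 : (-(2 * ((β:ℝ) - s) / q) + (-(2 / (q : ℝ)) * (((t + s : ℕ) : ℝ) - (t : ℝ)) +
                    (1 / (q : ℝ)) * ((t : ℝ) - if Even t then 1 else 0))) =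
                    (-2 * β + t - if Even t then 1 else 0) / q := by
                  push_cast; field_simp; ring
                rw [e1, e2]
                apply div_le_div_of_nonneg_right _ hq0.le
                by_cases hev : Even t
                · simp only [hev, if_true]; linarith
                · simp only [hev, if_false]
                  have : r ≤ 2 * β := by
                    have h3 : Odd t := Nat.not_even_iff_odd.1 hev
                    obtain ⟨a, ha⟩ := h3
                    obtain ⟨a', ha'⟩ := hqo
                    omega
                  have : (r:ℝ) ≤ 2 * β := by exact_mod_cast this
                  linarith
        · have hs2 : 2 * s = r + 1 := by omega
          have hsb : s = β := by omega
          obtain ⟨s', hs'⟩ : ∃ s', s = s' + 1 := ⟨s - 1, by omega⟩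
          have hev : Even t := by
            obtain ⟨a', ha'⟩ := hqo
            rw [Nat.even_iff]; omega
          have hg := hg2 (t + s') (by omega) (by omega)
          rw [div_le_iff₀ hDt0] at hg
          have hle : (D (t+s) : ℝ) ≤ D (t + s') := by
            rw [hs']; exact_mod_cast hDanti (t + s')
          have e0 : (n:ℝ) ^ (-(2 * ((β:ℝ) - s) / q)) = 1 := by rw [hsb]; simp
          rw [e0, one_mul]
          refine hle.trans (hg.trans (le_of_eq ?_))
          rw [mul_comm]
          congr 2
          simp only [hev, if_true]
          have e3 : 2 * (s':ℝ) + 1 = r := by exact_mod_cast (by omega : 2 * s' + 1 = r)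
          have e1 : (-1 : ℝ) + 2 * t / q = (t - r) / q := by
            rw [← hrq]; field_simp; ring
          rw [e1, ← e3]; push_cast; field_simp; ring
      calc _ ≤ (2 ^ r * (n:ℝ) ^ (-(2 * ((Sᶜ.card - s : ℕ):ℝ) / q))) * D (t + s) := by gcongr
        _ = 2 ^ r * ((n:ℝ) ^ (-(2 * ((Sᶜ.card - s : ℕ):ℝ) / q)) * D (t+s)) := by ring
        _ ≤ _ := by gcongr
    · rw [Finset.not_nonempty_iff_eq_empty] at hJ1
      have hJS : ∀ j ∈ J, j ∉ S := by
        intro j hj hjS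
        have : j ∈ J ∩ S := Finset.mem_inter.2 ⟨hj, hjS⟩
        rw [hJ1] at this; simp at this
      have hpow := rho_pow (q := q) hn h0 hρ (by omega : (univ \ J).card ≤ r)
      have hcast : (((univ \ J).card : ℕ) : ℝ) = r - J.card := by
        have h3 : (((univ \ J).card : ℕ) : ℝ) + (J.card : ℝ) = r := by exact_mod_cast hJc
        linarith
      rw [hcast] at hpow
      by_cases hJ0 : J = ∅
      · have hN : (N J).card ≤ D t * n := by
          refine le_trans (Finset.card_le_mul_card_image (f := fun z => z.1.1) (N J) (D t) ?_) ?_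
          · intro e he
            refine le_trans ?_ (hfib e)
            refine Finset.card_le_card_of_injOn (fun z => z.1.2) ?_ ?_
            · intro z hz
              have hz' := (Finset.mem_filter.1 hz).2
              simp only [Finset.coe_filter, Finset.mem_univ, true_and, Set.mem_ofPred_eq]
              rw [← hz', z.2.1]
            · intro z hz z' hz' he'
              have h1 := (Finset.mem_filter.1 hz).2
              have h2 := (Finset.mem_filter.1 hz').2
              exact Subtype.ext (Prod.ext (h1.trans h2.symm) he')
          · refine Nat.mul_le_mul_left _ (le_trans (Finset.card_le_card ?_) (hlab (lab z₀.1.1)))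
            intro e he
            rw [Finset.mem_image] at he
            obtain ⟨z, hz, rfl⟩ := he
            have hz' := (Finset.mem_filter.1 hz).2
            simp [hz'.1]
        have hND : ((N J).card : ℝ) ≤ D t * n := by exact_mod_cast hN
        subst hJ0
        calc _ ≤ (2 ^ r * (n:ℝ) ^ (-(2 * ((r:ℝ) - (∅ : Finset (Fin r)).card) / q))) * (D t * n) := by
              gcongr
          _ = 2 ^ r * (D t * ((n:ℝ) ^ (-(2 * (r:ℝ) / q)) * (n:ℝ) ^ (1:ℝ))) := by
              rw [Real.rpow_one]; simp; ring
          _ = _ := by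
              rw [← Real.rpow_add hn0]
              congr 3
              rw [← hrq]; field_simp; ring
      · have hJpos : 1 ≤ J.card := Finset.card_pos.2 (Finset.nonempty_iff_ne_empty.2 hJ0)
        have hJβ : J.card ≤ Sᶜ.card := Finset.card_le_card (fun j hj => by simp [hJS j hj])
        set U := J.image (c z₀.1.2) with hU
        have hUc : U.card = J.card := Finset.card_image_of_injective _ (hcinj _)
        have hN : (N J).card ≤ D J.card := by
          rw [← hUc]
          refine le_trans ?_ (hcod _)
          refine Finset.card_le_card_of_injOn (fun z => z.1.2) ?_ ?_
          · intro z hz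
            have hz' := (Finset.mem_filter.1 hz).2
            simp only [Finset.coe_filter, Finset.mem_univ, true_and, Set.mem_ofPred_eq]
            intro u hu
            rw [hU, Finset.mem_image] at hu
            obtain ⟨j, hj, rfl⟩ := hu
            have := hz'.2 j hj
            simp only [hv, hJS j hj, if_false] at this
            rw [← this]; exact hcA _ _
          · intro z hz z' hz' he
            have h1 := (Finset.mem_filter.1 hz).2
            have h2 := (Finset.mem_filter.1 hz').2
            have he' : z.1.2 = z'.1.2 := he
            refine Subtype.ext (Prod.ext (huniq _ _ (h1.1.trans h2.1.symm) ?_) he)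
            rw [z.2.1, z'.2.1, he']
        have hND : ((N J).card : ℝ) ≤ D J.card := by exact_mod_cast hN
        have hg := hg1 J.card hJpos (by omega)
        rw [div_le_iff₀ hDt0] at hg
        calc _ ≤ (2 ^ r * (n:ℝ) ^ (-(2 * ((r:ℝ) - J.card) / q))) *
                ((n : ℝ) ^ ((1 : ℝ) - 2 * (J.card : ℝ) / (q : ℝ)) * D t) := by
              gcongr
              exact hND.trans hg
          _ = 2 ^ r * (D t * ((n:ℝ) ^ (-(2 * ((r:ℝ) - J.card) / q)) *
                (n : ℝ) ^ ((1 : ℝ) - 2 * (J.card : ℝ) / (q : ℝ)))) := by ring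
          _ = _ := by
              rw [← Real.rpow_add hn0]
              congr 3
              rw [← hrq]; field_simp; ring
  have hexpand : ∑ z : {z : E × E // th z.1 = th z.2 ∧ z.1 ≠ z.2},
      (if lab z.1.1 = lab z₀.1.1 then ∏ j, ((if v z j = v z₀ j then (1:ℝ) else 0) + ρ) else 0)
      = ∑ J ∈ (univ : Finset (Fin r)).powerset, ρ ^ (univ \ J).card * ((N J).card : ℝ) := by
    have : ∀ J : Finset (Fin r), ((N J).card : ℝ) = ∑ z : {z : E × E // th z.1 = th z.2 ∧ z.1 ≠ z.2},
        (if lab z.1.1 = lab z₀.1.1 then ∏ j ∈ J, (if v z j = v z₀ j then (1:ℝ) else 0) else 0) := by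
      intro J
      simp only [N, Finset.card_filter]
      push_cast
      refine Finset.sum_congr rfl fun z _ => ?_
      rw [Finset.prod_boole]
      by_cases h : lab z.1.1 = lab z₀.1.1 <;> simp [h]
    simp only [this, Finset.mul_sum]
    rw [Finset.sum_comm]
    refine Finset.sum_congr rfl fun z _ => ?_
    by_cases h : lab z.1.1 = lab z₀.1.1
    · simp only [h, if_true]
      rw [Finset.prod_add]
      refine Finset.sum_congr rfl fun J _ => ?_
      rw [Finset.prod_const]; ring
    · simp [h]
  have hfin : ∑ J ∈ (univ : Finset (Fin r)).powerset, ρ ^ (univ \ J).card * ((N J).card : ℝ) ≤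
      4 ^ r * (D t * (n:ℝ) ^ (-1 + 2 * (t:ℝ) / q)) := by
    refine (Finset.sum_le_sum fun J _ => key J).trans (le_of_eq ?_)
    rw [Finset.sum_const, Finset.card_powerset, nsmul_eq_mul]
    simp only [Finset.card_univ, Fintype.card_fin]
    push_cast
    rw [← mul_assoc, ← mul_pow]; norm_num
  exact hexpand.le.trans hfin

lemma tagging {E α : Type*} [DecidableEq E] [DecidableEq α] {p : ℕ} (f : E → α) (s : Finset E) :
    ∀ Hs : Fin p → Multiset α, s.val.map f = ∑ θ, Hs θ → ∃ th : E → Option (Fin p),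
      (∀ e ∈ s, ∃ θ, th e = some θ ∧ f e ∈ Hs θ) ∧
      ∀ θ, (s.filter (fun e => th e = some θ)).card ≤ (Hs θ).card := by
  induction s using Finset.induction_on with
  | empty => intro Hs _; exact ⟨fun _ => none, by simp, by simp⟩
  | insert a s ha ih =>
    intro Hs h
    have hmem : f a ∈ ∑ θ, Hs θ := by rw [← h]; simp
    rw [Multiset.mem_sum] at hmem
    obtain ⟨θ₀, _, hθ⟩ := hmem
    have hcons : f a ::ₘ (Hs θ₀).erase (f a) = Hs θ₀ := Multiset.cons_erase hθ
    have hle : ∀ θ, Function.update Hs θ₀ ((Hs θ₀).erase (f a)) θ ≤ Hs θ := by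
      intro θ
      by_cases hh : θ = θ₀
      · subst hh; simp [Multiset.erase_le]
      · simp [hh]
    obtain ⟨th, h1, h2⟩ := ih (Function.update Hs θ₀ ((Hs θ₀).erase (f a))) (by
      have e1 := Finset.sum_update_of_mem (Finset.mem_univ θ₀) Hs ((Hs θ₀).erase (f a))
      have e2 := Finset.add_sum_erase univ Hs (Finset.mem_univ θ₀)
      rw [Finset.insert_val_of_notMem ha, Multiset.map_cons, ← e2, ← hcons, Multiset.cons_add,
        Multiset.cons_inj_right] at h
      rw [e1, h, Finset.sdiff_singleton_eq_erase])
    refine ⟨Function.update th a (some θ₀), ?_, ?_⟩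
    · intro e he
      by_cases hea : e = a
      · subst hea; exact ⟨θ₀, by simp, hθ⟩
      · obtain ⟨θ, h3, h4⟩ := h1 e ((Finset.mem_insert.1 he).resolve_left hea)
        exact ⟨θ, by simp [hea, h3], Multiset.mem_of_le (hle θ) h4⟩
    · intro θ
      have hs : s.filter (fun e => Function.update th a (some θ₀) e = some θ) =
          s.filter (fun e => th e = some θ) := by
        refine Finset.filter_congr fun e he => ?_
        have : e ≠ a := fun h => ha (h ▸ he)
        simp [this]
      rw [Finset.filter_insert]
      by_cases hh : θ = θ₀
      · subst hh
        simp only [Function.update_self, if_true]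
        refine (Finset.card_insert_le _ _).trans ?_
        rw [hs]
        have := h2 θ
        rw [Function.update_self] at this
        rw [← hcons, Multiset.card_cons]
        omega
      · have : ¬ (some θ₀ = some θ) := fun h => hh (Option.some.inj h).symm
        simp only [Function.update_self, this, if_false]
        rw [hs]
        exact (h2 θ).trans (Multiset.card_le_card (hle θ))

lemma maxCodeg_anti {n : ℕ} (H : Multiset (Finset (Fin n))) (s : ℕ) :
    mMaxCodeg H (s+1) ≤ mMaxCodeg H s := by
  unfold mMaxCodeg
  refine Finset.sup_le fun Q hQ => ?_
  have hc := (Finset.mem_filter.1 hQ).2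
  obtain ⟨Q', hs, hc'⟩ := Finset.exists_subset_card_eq (s := Q) (n := s) (by omega)
  refine le_trans ?_ (Finset.le_sup (f := mCodeg H) (b := Q') (by simp [hc']))
  unfold mCodeg
  exact Multiset.card_le_card (Multiset.monotone_filter_right _ (fun C h => hs.trans h))

lemma edges_multiset {n k : ℕ} (H : Fin k → Finset (Finset (Fin n))) :
    (univ : Finset (Σ i, {C // C ∈ H i})).val.map (fun e => e.2.1) = ∑ i, (H i).val := by
  have h1 : ∀ (s : Finset (Σ i, {C // C ∈ H i})), s.val.map (fun e => e.2.1) =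
      ∑ e ∈ s, ({e.2.1} : Multiset (Finset (Fin n))) := by
    intro s
    have h := Multiset.sum_map_singleton (s.val.map (fun e : (Σ i, {C // C ∈ H i}) => e.2.1))
    rw [Multiset.map_map] at h
    exact h.symm
  rw [h1, Fintype.sum_sigma]
  refine Finset.sum_congr rfl fun i _ => ?_
  have := Finset.sum_coe_sort (H i) (fun C => ({C} : Multiset (Finset (Fin n))))
  refine Eq.trans ?_ (this.trans ?_)
  · rfl
  · rw [Finset.sum, Multiset.sum_map_singleton]

lemma cs_pairs {E : Type*} [Fintype E] [DecidableEq E] {p : ℕ} (th : E → Fin p) (g : E → ℝ)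
    (hg : ∀ e, g e * g e = 1) (w : Fin p → ℝ) (hw : ∀ θ, w θ * w θ = 1) :
    (∑ e, w (th e) * g e) ^ 2 ≤ p * (Fintype.card E +
      ∑ z : {z : E × E // th z.1 = th z.2 ∧ z.1 ≠ z.2}, g z.1.1 * g z.1.2) := by
  have h1 : ∑ e, w (th e) * g e = ∑ θ, w θ * ∑ e, (if th e = θ then g e else 0) := by
    simp only [Finset.mul_sum]
    rw [Finset.sum_comm]
    refine Finset.sum_congr rfl fun e _ => ?_
    simp
  rw [h1]
  refine (Finset.sum_mul_sq_le_sq_mul_sq _ _ _).trans (le_of_eq ?_)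
  congr 1
  · simp [pow_two, hw]
  · have h2 : ∑ z : {z : E × E // th z.1 = th z.2 ∧ z.1 ≠ z.2}, g z.1.1 * g z.1.2 =
        ∑ e, ∑ e', if th e = th e' ∧ e ≠ e' then g e * g e' else 0 := by
      rw [← Fintype.sum_prod_type' (f := fun e e' => if th e = th e' ∧ e ≠ e' then g e * g e' else 0),
        ← Finset.sum_filter]
      exact (Finset.sum_subtype (univ.filter (fun z : E × E => th z.1 = th z.2 ∧ z.1 ≠ z.2))
        (by simp) (fun z : E × E => g z.1 * g z.2)).symm
    have h3 : (Fintype.card E : ℝ) = ∑ e : E, ∑ e', if e = e' then g e * g e' else 0 := by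
      simp [hg]
    rw [h2, h3, ← Finset.sum_add_distrib]
    have h4 : ∀ θ, (∑ e, (if th e = θ then g e else 0)) ^ 2 =
        ∑ e, ∑ e', (if th e = θ then g e else 0) * (if th e' = θ then g e' else 0) := by
      intro θ; rw [pow_two, Finset.sum_mul_sum]
    simp only [h4]
    rw [Finset.sum_comm]
    refine Finset.sum_congr rfl fun e _ => ?_
    rw [Finset.sum_comm, ← Finset.sum_add_distrib]
    refine Finset.sum_congr rfl fun e' _ => ?_
    have : ∑ θ, (if th e = θ then g e else 0) * (if th e' = θ then g e' else 0) =
        if th e = th e' then g e * g e' else 0 := by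
      simp [ite_mul, eq_comm]
    rw [this]
    by_cases he : e = e'
    · subst he; simp
    · simp [he]

lemma core_bound {E Θ : Type*} [Fintype E] [DecidableEq E] [DecidableEq Θ] {k n q t r : ℕ}
    (hn : 2 ≤ n) (hq : 3 ≤ q) (hqo : Odd q) (ht : 1 ≤ t) (hr : r + t = q)
    (lab : E → Fin k) (th : E → Θ) (A : E → Finset (Fin n)) (Q : Θ → Finset (Fin n))
    (c : E → Fin r → Fin n) (D : ℕ → ℕ) (hDanti : ∀ s, D (s+1) ≤ D s) (hDt : 0 < D t)
    (hQ : ∀ e, Q (th e) ⊆ A e) (hQc : ∀ e, (Q (th e)).card = t)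
    (hcinj : ∀ e, Function.Injective (c e)) (hcA : ∀ e j, c e j ∈ A e)
    (hcQ : ∀ e j, c e j ∉ Q (th e))
    (hmatch : ∀ e e' u, lab e = lab e' → u ∈ A e → u ∈ A e' → e = e')
    (hcod : ∀ U : Finset (Fin n), (univ.filter (fun e => U ⊆ A e)).card ≤ D U.card)
    (hfib : ∀ e, (univ.filter (fun e' => th e' = th e)).card ≤ D t)
    (hlab : ∀ i, (univ.filter (fun e => lab e = i)).card ≤ n)
    (hg1 : ∀ s : ℕ, 1 ≤ s → s ≤ (q - t + 1) / 2 →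
      (D s : ℝ) / D t ≤ (n : ℝ) ^ ((1 : ℝ) - 2 * (s : ℝ) / (q : ℝ)))
    (hg2 : ∀ s : ℕ, t ≤ s → s ≤ (q + t) / 2 →
      (D s : ℝ) / D t ≤ (n : ℝ) ^ (-(2 / (q : ℝ)) * ((s : ℝ) - (t : ℝ)) +
        (1 / (q : ℝ)) * ((t : ℝ) - if Even t then 1 else 0)))
    (y : (Fin k → ℤˣ) → (Fin n → ℤˣ)) :
    Ex (fun b => ∑ z : {z : E × E // th z.1 = th z.2 ∧ z.1 ≠ z.2},
      sg b (lab z.1.1) * sg b (lab z.1.2) *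
        ∏ j, (sg (y b) (c z.1.1 j) * sg (y b) (c z.1.2 j))) ≤
    (96 * Real.exp 1 * √(4 * q * 4 ^ q)) *
      (D t * n * √((k : ℝ) * (n : ℝ) ^ ((1 : ℝ) - 2 / (q : ℝ))) * Real.log n) := by
  classical
  have hn0 : (0:ℝ) < n := by positivity
  have hn1 : (1:ℝ) ≤ n := by exact_mod_cast (by omega : 1 ≤ n)
  have hn2 : (2:ℝ) ≤ n := by exact_mod_cast hn
  have hq0 : (0:ℝ) < q := by positivity
  have hq3 : (3:ℝ) ≤ q := by exact_mod_cast hq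
  have hDt0 : (0:ℝ) < D t := by exact_mod_cast hDt
  have hrq : (r:ℝ) + t = q := by exact_mod_cast hr
  set P : ℝ := (n : ℝ) ^ ((1 : ℝ) - 2 / (q : ℝ)) with hP
  have h2q : 2 / (q:ℝ) ≤ 1 := by rw [div_le_one hq0]; linarith
  have hP1 : 1 ≤ P := Real.one_le_rpow hn1 (by linarith)
  have hPn : P ≤ n := by
    calc P ≤ (n:ℝ) ^ (1:ℝ) := Real.rpow_le_rpow_of_exponent_le hn1 (by
          have : 0 ≤ 2 / (q:ℝ) := by positivity
          linarith)
      _ = n := Real.rpow_one _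
  set m : ℕ := ⌈P⌉₊ with hm
  have hmP : P ≤ m := Nat.le_ceil P
  have hm2P : (m:ℝ) ≤ 2 * P := by
    have := Nat.ceil_lt_add_one (by linarith : 0 ≤ P)
    linarith
  have hm0 : 0 < m := Nat.ceil_pos.2 (by linarith)
  have hm0' : (0:ℝ) < m := by exact_mod_cast hm0
  have hm1' : (1:ℝ) ≤ m := by exact_mod_cast hm0
  have hmn : m ≤ n := Nat.ceil_le.2 hPn
  have hmn' : (m:ℝ) ≤ n := by exact_mod_cast hmn
  have hρ : (m:ℝ) / n ≤ 2 * (n:ℝ) ^ (-(2 / (q:ℝ))) := by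
    rw [div_le_iff₀ hn0]
    refine hm2P.trans (le_of_eq ?_)
    rw [hP, sub_eq_add_neg, Real.rpow_add hn0, Real.rpow_one]; ring
  have hlog : 1/2 ≤ Real.log n := by
    have h1 : Real.log 2 ≤ Real.log n := Real.log_le_log (by norm_num) hn2
    have := Real.log_two_gt_d9
    linarith
  -- choice of the power
  obtain ⟨M, hM1, hM2⟩ : ∃ M : ℕ, (2:ℝ) ^ M ≤ q * m * Real.log n ∧ q * m * Real.log n < 2 ^ (M+1) := by
    refine exists_nat_pow_near ?_ (by norm_num)
    have : (3:ℝ) * 1 * (1/2) ≤ q * m * Real.log n := by gcongr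
    linarith
  have hU : 2 * (n:ℝ)^(m*r) ≤ Real.exp ((2^(M+1) : ℕ) : ℝ) := by
    have e1 : 2 * (n:ℝ)^(m*r) ≤ (n:ℝ)^(q * m) := by
      calc 2 * (n:ℝ)^(m*r) ≤ n * (n:ℝ)^(m*r) := by gcongr
        _ = (n:ℝ)^(m*r+1) := by rw [pow_succ]; ring
        _ ≤ _ := by
          refine pow_le_pow_right₀ hn1 ?_
          rw [← hr]
          nlinarith
    refine e1.trans ?_
    have e2 : (n:ℝ)^(q*m) = Real.exp (q * m * Real.log n) := by
      rw [← Real.rpow_natCast, Real.rpow_def_of_pos hn0]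
      push_cast; congr 1; ring
    rw [e2]
    push_cast
    exact Real.exp_le_exp.2 hM2.le
  -- the two halves
  let S : Finset (Fin r) := univ.filter (fun j => (j : ℕ) < (r+1)/2)
  have hScard : S.card = (r+1)/2 := by
    simp only [S]
    rw [Fin.card_filter_val_lt]; omega
  have hSc : Sᶜ.card = r - (r+1)/2 := by
    rw [Finset.card_compl, hScard, Fintype.card_fin]
  set κ : ℝ := 4 ^ r * (D t * (n:ℝ) ^ (-1 + 2 * (t:ℝ) / q)) with hκ
  have hκ0 : 0 < κ := by positivity
  have hρ1 : (m:ℝ)/n ≤ 1 := by rw [div_le_one hn0]; exact hmn'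
  have hkap := kappa_bound hn hq hqo ht hr lab th A Q c D hDanti hDt hQ hQc hcinj hcA hcQ hmatch
    hcod hfib hlab hg1 hg2 (ρ := (m:ℝ)/n) (by positivity) hρ1 hρ
  have hlne : ∀ z : {z : E × E // th z.1 = th z.2 ∧ z.1 ≠ z.2}, lab z.1.1 ≠ lab z.1.2 := by
    intro z hl
    have : (Q (th z.1.1)).Nonempty := by
      rw [← Finset.card_pos, hQc]; omega
    obtain ⟨u, hu⟩ := this
    exact z.2.2 (hmatch _ _ u hl (hQ _ hu) (hQ _ (z.2.1 ▸ hu)))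
  have hmain := decouple (fun z : {z : E × E // th z.1 = th z.2 ∧ z.1 ≠ z.2} => lab z.1.1)
    (fun z => lab z.1.2) hlne
    (fun (x : Fin n → ℤˣ) z => ∏ j, (sg x (c z.1.1 j) * sg x (c z.1.2 j)))
    (12 * Real.exp 1 * √((2^(M+1):ℕ) *
      (Fintype.card {z : E × E // th z.1 = th z.2 ∧ z.1 ≠ z.2} * κ * ((n:ℝ)/m)^r)))
    (by
      intro δ hδ yy
      have := kikuchi_bound (by omega : 0 < n) hm0
        (fun z : {z : E × E // th z.1 = th z.2 ∧ z.1 ≠ z.2} => lab z.1.1)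
        (fun z j => if j ∈ S then c z.1.1 j else c z.1.2 j)
        (fun z j => if j ∈ Sᶜ then c z.1.1 j else c z.1.2 j) δ hδ κ hκ0
        (hkap S (by omega) (by omega))
        (hkap Sᶜ (by rw [compl_compl]; omega) (by rw [compl_compl]; omega))
        M hU (fun b u => sg (yy b) u) (fun b u => sg_mul_self _ _)
      refine le_trans (le_of_eq ?_) this
      congr 1
      funext s
      refine Finset.sum_congr rfl fun z _ => ?_
      congr 2
      refine Finset.prod_congr rfl fun j _ => ?_
      by_cases hj : j ∈ S
      · simp [hj]
      · simp [hj, mul_comm])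
    y
  refine hmain.trans ?_
  -- counting
  have hEcard : Fintype.card E ≤ n * k := by
    have := Finset.card_le_mul_card_image (f := lab) (univ : Finset E) n (fun i _ => hlab i)
    refine this.trans (Nat.mul_le_mul_left _ ?_)
    simpa using Finset.card_le_univ (univ.image lab)
  have hZcard : Fintype.card {z : E × E // th z.1 = th z.2 ∧ z.1 ≠ z.2} ≤ D t * Fintype.card E := by
    have := Finset.card_le_mul_card_image (f := fun z => z.1.1)
      (univ : Finset {z : E × E // th z.1 = th z.2 ∧ z.1 ≠ z.2}) (D t) (by
        intro e he
        refine le_trans ?_ (hfib e)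
        refine Finset.card_le_card_of_injOn (fun z => z.1.2) ?_ ?_
        · intro z hz
          have hz' := (Finset.mem_filter.1 hz).2
          simp only [Finset.coe_filter, Finset.mem_univ, true_and, Set.mem_ofPred_eq]
          rw [← hz', z.2.1]
        · intro z hz z' hz' he'
          have h1 := (Finset.mem_filter.1 hz).2
          have h2 := (Finset.mem_filter.1 hz').2
          exact Subtype.ext (Prod.ext (h1.trans h2.symm) he'))
    exact this.trans (Nat.mul_le_mul_left _ (Finset.card_le_univ _))
  have hZ : (Fintype.card {z : E × E // th z.1 = th z.2 ∧ z.1 ≠ z.2} : ℝ) ≤ D t * (n * k) := by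
    exact_mod_cast hZcard.trans (Nat.mul_le_mul_left _ hEcard)
  have hnm : (n:ℝ)/m ≤ (n:ℝ) ^ (2/(q:ℝ)) := by
    rw [div_le_iff₀ hm0']
    calc (n:ℝ) = (n:ℝ) ^ (2/(q:ℝ)) * P := by
          rw [hP, ← Real.rpow_add hn0]; simp
      _ ≤ _ := by gcongr
  have hnmr : ((n:ℝ)/m)^r ≤ (n:ℝ) ^ (2 * (r:ℝ) /q) := by
    calc ((n:ℝ)/m)^r ≤ ((n:ℝ) ^ (2/(q:ℝ)))^r := by gcongr
      _ = _ := by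
        rw [← Real.rpow_natCast, ← Real.rpow_mul hn0.le]; congr 1; ring
  have hpowM : (((2^(M+1):ℕ)) : ℝ) ≤ 4 * q * P * Real.log n := by
    push_cast
    rw [pow_succ]
    have : (q:ℝ) * m * Real.log n ≤ q * (2 * P) * Real.log n := by gcongr
    linarith
  have hin : ((2^(M+1):ℕ) : ℝ) *
      (Fintype.card {z : E × E // th z.1 = th z.2 ∧ z.1 ≠ z.2} * κ * ((n:ℝ)/m)^r) ≤
      (4 * q * 4 ^ q) * ((D t * n * (2 * Real.log n)) ^ 2 * (k * P)) := by
    calc _ ≤ (4 * q * P * Real.log n) * ((D t * (n * k)) * κ * (n:ℝ) ^ (2 * (r:ℝ) /q)) := by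
          gcongr
      _ = (4 * q * 4 ^ r) * ((D t)^2 * n * (k * P) * Real.log n) *
          ((n:ℝ) ^ (-1 + 2 * (t:ℝ) / q) * (n:ℝ) ^ (2 * (r:ℝ) /q)) := by rw [hκ]; ring
      _ = (4 * q * 4 ^ r) * ((D t)^2 * n * (k * P) * Real.log n) * n := by
          rw [← Real.rpow_add hn0]
          congr 1
          have : -1 + 2 * (t:ℝ) / q + 2 * (r:ℝ) / q = 1 := by
            rw [← hrq]; field_simp; ring
          rw [this, Real.rpow_one]
      _ ≤ (4 * q * 4 ^ q) * ((D t)^2 * n * (k * P) * (2 * Real.log n)^2) * n := by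
          gcongr
          · norm_num
          · omega
          · nlinarith
      _ = _ := by ring
  have hsq := Real.sqrt_le_sqrt hin
  have e3 : √((4 * q * 4 ^ q) * ((D t * n * (2 * Real.log n)) ^ 2 * (k * P))) =
      √(4 * q * 4 ^ q) * ((D t * n * (2 * Real.log n)) * √(k * P)) := by
    rw [Real.sqrt_mul (by positivity)]
    congr 1
    rw [Real.sqrt_mul (by positivity), Real.sqrt_sq (by positivity)]
  rw [e3] at hsq
  calc _ ≤ 4 * (12 * Real.exp 1 * (√(4 * q * 4 ^ q) * ((D t * n * (2 * Real.log n)) * √(k * P)))) := by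
        gcongr
    _ = _ := by ring

set_option maxHeartbeats 800000

/-- Refuting regular q-XOR. For every odd `q ≥ 3` there is `C > 0`
depending only on `q` such that for all `n ≥ 2`: if `H 1, …, H k` are `q`-uniform
matchings on `[n]` whose disjoint union `H` is `t`-approximately strongly regular
with co-degree values `d r := d_{H,r}`, and `k ≥ d 1 ≥ n^{1−2/q}·log n`, then
`E_b[val(Ψ_b)²] ≤ 2|H|²/d t + C·|H|·n·√(k·n^{1−2/q})·log n`, where `b` is uniform
on `{±1}^k`, `Ψ_b(x) = Σ_i b i Σ_{C ∈ H i} ∏_{u∈C} x u` and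
`val(Ψ_b) = max_{x ∈ {±1}^n} Ψ_b(x)`. -/
theorem stmt11 :
    ∀ q : ℕ, Odd q → 3 ≤ q →
    ∃ C : ℝ, 0 < C ∧
      ∀ (n k t : ℕ) (H : Fin k → Finset (Finset (Fin n))), 2 ≤ n →
        1 ≤ t → t ≤ q →
        (∀ i, ∀ A ∈ H i, A.card = q) →
        (∀ i, ∀ A ∈ H i, ∀ A' ∈ H i, A ≠ A' → Disjoint A A') →
        mASR q t (∑ i, (H i).val) →
        mMaxCodeg (∑ i, (H i).val) 1 ≤ k →
        (n : ℝ) ^ ((1 : ℝ) - 2 / (q : ℝ)) * Real.log n ≤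
          (mMaxCodeg (∑ i, (H i).val) 1 : ℝ) →
        (2 ^ k : ℝ)⁻¹ * ∑ b : Fin k → ℤˣ,
            (⨆ x : Fin n → ℤˣ,
              ∑ i, ((b i : ℤ) : ℝ) * ∑ A ∈ H i, ∏ u ∈ A, ((x u : ℤ) : ℝ)) ^ 2
          ≤ 2 * (((∑ i, (H i).card : ℕ) : ℝ)) ^ 2 / (mMaxCodeg (∑ i, (H i).val) t : ℝ)
            + C * ((∑ i, (H i).card : ℕ) : ℝ) * (n : ℝ) *
              Real.sqrt ((k : ℝ) * (n : ℝ) ^ ((1 : ℝ) - 2 / (q : ℝ))) * Real.log n := by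
  classical
  intro q hqo hq
  refine ⟨2 * (96 * Real.exp 1 * √(4 * q * 4 ^ q)), by positivity, ?_⟩
  intro n k t H hn ht htq hcard hdisj hASR _ _
  obtain ⟨p, Hs, Qs, hsum, hQs, hsz, hg1, hg2, _⟩ := hASR
  have hlog : 0 ≤ Real.log n := Real.log_natCast_nonneg n
  set D : ℕ → ℕ := fun s => mMaxCodeg (∑ i, (H i).val) s with hD
  let E := (Σ i, {C // C ∈ H i})
  have hms := edges_multiset H
  have hEcard : Fintype.card E = ∑ i, (H i).card := by
    simp [E, Fintype.card_sigma]
  set N : ℕ := ∑ i, (H i).card with hN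
  let lab : E → Fin k := fun e => e.1
  let A : E → Finset (Fin n) := fun e => e.2.1
  have hΨ : ∀ (b : Fin k → ℤˣ) (x : Fin n → ℤˣ),
      ∑ i, ((b i : ℤ) : ℝ) * ∑ A ∈ H i, ∏ u ∈ A, ((x u : ℤ) : ℝ) =
      ∑ e : E, sg b (lab e) * ∏ u ∈ A e, sg x u := by
    intro b x
    rw [Fintype.sum_sigma]
    refine Finset.sum_congr rfl fun i _ => ?_
    rw [Finset.mul_sum]
    exact (Finset.sum_coe_sort (H i)
      (fun C => ((b i : ℤ) : ℝ) * ∏ u ∈ C, ((x u : ℤ) : ℝ))).symm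
  rcases isEmpty_or_nonempty E with hE | hE
  · have h0 : ∀ (b : Fin k → ℤˣ) (x : Fin n → ℤˣ),
        ∑ i, ((b i : ℤ) : ℝ) * ∑ A ∈ H i, ∏ u ∈ A, ((x u : ℤ) : ℝ) = 0 := by
      intro b x
      rw [hΨ]; simp
    have h00 : ∀ b : Fin k → ℤˣ, (⨆ x : Fin n → ℤˣ,
        ∑ i, ((b i : ℤ) : ℝ) * ∑ A ∈ H i, ∏ u ∈ A, ((x u : ℤ) : ℝ)) ^ 2 = 0 := by
      intro b
      rw [iSup_congr (h0 b), ciSup_const]; norm_num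
    rw [Finset.sum_congr rfl (fun b _ => h00 b), Finset.sum_const_zero, mul_zero]
    refine add_nonneg (div_nonneg (mul_nonneg zero_le_two (sq_nonneg _)) (Nat.cast_nonneg _))
      (mul_nonneg (mul_nonneg (mul_nonneg (mul_nonneg ?_ (Nat.cast_nonneg _)) (Nat.cast_nonneg _))
        (Real.sqrt_nonneg _)) hlog)
    exact mul_nonneg zero_le_two (mul_nonneg (mul_nonneg (by norm_num) (Real.exp_nonneg _))
      (Real.sqrt_nonneg _))
  obtain ⟨th', hth1, hth2⟩ := tagging A (univ : Finset E) Hs (hms.trans hsum)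
  choose th hth3 hth4 using fun e => hth1 e (Finset.mem_univ e)
  have hQ : ∀ e, Qs (th e) ⊆ A e := fun e => (hQs (th e)).2 _ (hth4 e)
  have hQc : ∀ e, (Qs (th e)).card = t := fun e => (hQs (th e)).1
  have hAc : ∀ e, (A e).card = q := fun e => hcard e.1 _ e.2.2
  have hmatch : ∀ (e e' : E) u, lab e = lab e' → u ∈ A e → u ∈ A e' → e = e' := by
    rintro ⟨i, C, hC⟩ ⟨i', C', hC'⟩ u hl hu hu'
    simp only [lab] at hl
    subst hl
    by_cases hCC : C = C'
    · subst hCC; rfl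
    · exact absurd hu' (Finset.disjoint_left.1 (hdisj i C hC C' hC' hCC) hu)
  have hcod : ∀ U : Finset (Fin n), (univ.filter (fun e => U ⊆ A e)).card ≤ D U.card := by
    intro U
    have h1 : (univ.filter (fun e => U ⊆ A e)).card = mCodeg (∑ i, (H i).val) U := by
      unfold mCodeg
      rw [← hms, Multiset.filter_map, Multiset.card_map]
      rfl
    rw [h1]
    exact Finset.le_sup (f := mCodeg (∑ i, (H i).val)) (by simp)
  have hfib' : ∀ e, (univ.filter (fun e' => th e' = th e)).card ≤ (Hs (th e)).card := by
    intro e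
    refine le_trans (Finset.card_le_card ?_) (hth2 (th e))
    intro e' he'
    have := (Finset.mem_filter.1 he').2
    simp [hth3, this]
  have hfib : ∀ e, (univ.filter (fun e' => th e' = th e)).card ≤ D t := by
    intro e
    have h2 : (Hs (th e)).card ≤ D t := by exact_mod_cast (hsz (th e)).2
    exact (hfib' e).trans h2
  have hDt : 0 < D t := by
    obtain ⟨e⟩ := hE
    refine lt_of_lt_of_le (Finset.card_pos.2 ⟨e, by simp⟩) (hfib e)
  have hDt0 : (0:ℝ) < D t := by exact_mod_cast hDt
  have hne : ∀ e, (A e).Nonempty := fun e => by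
    rw [← Finset.card_pos, hAc]; omega
  choose pt hpt using hne
  have hlab : ∀ i, (univ.filter (fun e => lab e = i)).card ≤ n := by
    intro i
    have h1 : (univ.filter (fun e => lab e = i)).card ≤ (univ : Finset (Fin n)).card := by
      refine Finset.card_le_card_of_injOn pt (fun _ _ => by simp) ?_
      intro e he e' he' hee
      have h2 : lab e = i := (Finset.mem_filter.1 he).2
      have h3 : lab e' = i := (Finset.mem_filter.1 he').2
      exact hmatch e e' (pt e) (h2.trans h3.symm) (hpt e) (hee ▸ hpt e')
    simpa using h1
  obtain ⟨r, hr⟩ : ∃ r, r + t = q := ⟨q - t, by omega⟩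
  have hsd : ∀ e, (A e \ Qs (th e)).card = r := by
    intro e
    rw [Finset.card_sdiff_of_subset (hQ e), hAc, hQc]; omega
  let c : E → Fin r → Fin n := fun e => (A e \ Qs (th e)).orderEmbOfFin (hsd e)
  have hcmem : ∀ e j, c e j ∈ A e \ Qs (th e) := fun e j =>
    Finset.orderEmbOfFin_mem _ (hsd e) j
  have hcprod : ∀ e (x : Fin n → ℤˣ), ∏ u ∈ A e, sg x u =
      (∏ u ∈ Qs (th e), sg x u) * ∏ j, sg x (c e j) := by
    intro e x
    rw [← Finset.prod_sdiff (hQ e), mul_comm]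
    congr 1
    conv_lhs => rw [← Finset.map_orderEmbOfFin_univ (A e \ Qs (th e)) (hsd e)]
    rw [Finset.prod_map]
    rfl
  -- maximizers
  have hmax : ∀ b : Fin k → ℤˣ, ∃ x : Fin n → ℤˣ,
      (∑ i, ((b i : ℤ) : ℝ) * ∑ A ∈ H i, ∏ u ∈ A, ((x u : ℤ) : ℝ)) =
      ⨆ x : Fin n → ℤˣ, ∑ i, ((b i : ℤ) : ℝ) * ∑ A ∈ H i, ∏ u ∈ A, ((x u : ℤ) : ℝ) :=
    fun b => exists_eq_ciSup_of_finite
  choose y hy using hmax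
  have hcore := core_bound hn hq hqo ht hr lab th A Qs c D (fun s => maxCodeg_anti _ s) hDt hQ hQc
    (fun e => (Finset.orderEmbOfFin _ (hsd e)).injective)
    (fun e j => (Finset.mem_sdiff.1 (hcmem e j)).1)
    (fun e j => (Finset.mem_sdiff.1 (hcmem e j)).2) hmatch hcod hfib hlab hg1 hg2 y
  set W : ℝ := 96 * Real.exp 1 * √(4 * q * 4 ^ q) with hW
  set R : ℝ := √((k : ℝ) * (n : ℝ) ^ ((1 : ℝ) - 2 / (q : ℝ))) with hR
  have hR0 : 0 ≤ R := Real.sqrt_nonneg _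
  have hW0 : 0 ≤ W := by positivity
  have hstep : (2 ^ k : ℝ)⁻¹ * ∑ b : Fin k → ℤˣ,
      (⨆ x : Fin n → ℤˣ,
        ∑ i, ((b i : ℤ) : ℝ) * ∑ A ∈ H i, ∏ u ∈ A, ((x u : ℤ) : ℝ)) ^ 2 ≤
      p * (N + W * (D t * n * R * Real.log n)) := by
    change Ex (fun b => (⨆ x : Fin n → ℤˣ,
        ∑ i, ((b i : ℤ) : ℝ) * ∑ A ∈ H i, ∏ u ∈ A, ((x u : ℤ) : ℝ)) ^ 2) ≤ _
    have h1 : ∀ b : Fin k → ℤˣ, (⨆ x : Fin n → ℤˣ,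
        ∑ i, ((b i : ℤ) : ℝ) * ∑ A ∈ H i, ∏ u ∈ A, ((x u : ℤ) : ℝ)) ^ 2 ≤
        p * (N + ∑ z : {z : E × E // th z.1 = th z.2 ∧ z.1 ≠ z.2},
          sg b (lab z.1.1) * sg b (lab z.1.2) *
          ∏ j, (sg (y b) (c z.1.1 j) * sg (y b) (c z.1.2 j))) := by
      intro b
      rw [← hy b, hΨ]
      have hprodsq : ∀ {ι : Type} (s : Finset ι) (f : ι → Fin n),
          (∏ u ∈ s, sg (y b) (f u)) * (∏ u ∈ s, sg (y b) (f u)) = 1 := by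
        intro ι s f
        rw [← Finset.prod_mul_distrib]
        simp [sg_mul_self]
      have h2 := cs_pairs th (fun e => sg b (lab e) * ∏ j, sg (y b) (c e j))
        (fun e => by
          have := hprodsq univ (c e)
          have h3 := sg_mul_self b (lab e)
          calc _ = (sg b (lab e) * sg b (lab e)) *
                ((∏ j, sg (y b) (c e j)) * ∏ j, sg (y b) (c e j)) := by ring
            _ = 1 := by rw [this, h3, one_mul])
        (fun θ => ∏ u ∈ Qs θ, sg (y b) u) (fun θ => hprodsq (Qs θ) id)
      rw [hEcard] at h2
      refine le_trans (le_of_eq ?_) (h2.trans (le_of_eq ?_))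
      · congr 1
        refine Finset.sum_congr rfl fun e _ => ?_
        rw [hcprod]; ring
      · congr 2
        refine Finset.sum_congr rfl fun z _ => ?_
        rw [Finset.prod_mul_distrib]; ring
    refine (Ex_mono h1).trans ?_
    rw [Ex_mul, Ex_add, Ex_const]
    gcongr
  refine hstep.trans ?_
  have hp : (p:ℝ) * D t ≤ 2 * N := by
    have h1 : ∑ θ, (Hs θ).card = N := by
      rw [← Multiset.card_sum, ← hsum, Multiset.card_sum]
      rfl
    have h2 : ∑ θ : Fin p, (D t : ℝ) / 2 ≤ ∑ θ, ((Hs θ).card : ℝ) :=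
      Finset.sum_le_sum fun θ _ => (hsz θ).1
    rw [← Nat.cast_sum, h1] at h2
    simp only [Finset.sum_const, Finset.card_univ, Fintype.card_fin, nsmul_eq_mul] at h2
    linarith
  have hp' : (p:ℝ) ≤ 2 * N / D t := by rw [le_div_iff₀ hDt0]; exact hp
  calc (p:ℝ) * (N + W * (D t * n * R * Real.log n))
      = p * N + (p * D t) * (W * (n * R * Real.log n)) := by ring
    _ ≤ (2 * N / D t) * N + (2 * N) * (W * (n * R * Real.log n)) :=
        add_le_add (mul_le_mul_of_nonneg_right hp' (Nat.cast_nonneg _))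
          (mul_le_mul_of_nonneg_right hp (mul_nonneg hW0
            (mul_nonneg (mul_nonneg (Nat.cast_nonneg _) hR0) hlog)))
    _ = _ := by ring
end
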